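/- arXiv:math/0104178 — 2 statements merged into one kernel-verified Lean document; each statement's English description precedes it below -/
import Mathlib

section
/- Assume the local setting with κ_v = 1, i.e. |1 − q|_v < |p|_v^{1/(p−1)}. Let μ ≥ 1 and let a_0, …, a_{μ−1} ∈ K_v(x). Let G(x) be the μ×μ matrix whose entries in position (j+1, j) equal 1 for 1 ≤ j ≤ μ−1, whose last column is (a_0(x), a_1(x), …, a_{μ−1}(x))^T, and whose remaining entries are 0 (the matrix of the operator Δ_q in a cyclic basis), and define G_n and χ_v as usual. If max_{0≤i≤μ−1} |a_i(x)|_{v,Gauss} > 1, then χ_v = |p|_v^{1/(p−1)} / max_{0≤i≤μ−1} |a_i(x)|_{v,Gauss}^{1/(μ−i)}. -/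
open Filter
open scoped ENNReal

noncomputable section

variable {Kv : Type*} [NormedField Kv]

/-- `[n]_q = 1 + q + ⋯ + q^{n-1}`. -/
def qNat (q : Kv) (n : ℕ) : Kv := ∑ i ∈ Finset.range n, q ^ i

/-- `[n]_q! = [1]_q ⋯ [n]_q`. -/
def qFactorial (q : Kv) : ℕ → Kv
  | 0 => 1
  | n + 1 => qFactorial q n * qNat q (n + 1)

/-- The Gaussian binomial coefficient `binom(n,i)_q`. -/
def qBinom (q : Kv) (n i : ℕ) : Kv := qFactorial q n / (qFactorial q i * qFactorial q (n - i))

/-- The substitution `x ↦ qx` on rational functions. -/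
def ratSubst (q : Kv) (f : RatFunc Kv) : RatFunc Kv :=
  algebraMap (Polynomial Kv) (RatFunc Kv) (f.num.comp (Polynomial.C q * Polynomial.X)) /
    algebraMap (Polynomial Kv) (RatFunc Kv) (f.denom.comp (Polynomial.C q * Polynomial.X))

/-- The `q`-difference operator `d_q f(x) = (f(qx) - f(x))/((q-1)x)`. -/
def qDeriv (q : Kv) (f : RatFunc Kv) : RatFunc Kv :=
  (ratSubst q f - f) / (RatFunc.C (q - 1) * RatFunc.X)

/-- The Gauss norm of a polynomial: the sup of the norms of its coefficients. -/
def polyGaussNorm (P : Polynomial Kv) : ℝ := ⨆ i : ℕ, ‖P.coeff i‖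

/-- The Gauss norm of a rational function. -/
def gaussNorm (f : RatFunc Kv) : ℝ := polyGaussNorm f.num / polyGaussNorm f.denom

/-- The Gauss norm of a matrix of rational functions: max of the Gauss norms of the entries. -/
def matGaussNorm {μ : ℕ} (M : Matrix (Fin μ) (Fin μ) (RatFunc Kv)) : ℝ :=
  ⨆ i, ⨆ j, gaussNorm (M i j)

/-- The sequence of matrices `G_n`: `G_0 = 1`, `G_{n+1}(x) = G(x)·G_n(qx) + (d_q G_n)(x)`. -/
def Gseq {μ : ℕ} (q : Kv) (G : Matrix (Fin μ) (Fin μ) (RatFunc Kv)) :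
    ℕ → Matrix (Fin μ) (Fin μ) (RatFunc Kv)
  | 0 => 1
  | n + 1 => G * (Gseq q G n).map (ratSubst q) + (Gseq q G n).map (qDeriv q)

/-- `χ_v = min(1, liminf |G_n/[n]_q!|^{-1/n})`, computed in `ℝ≥0∞`. -/
def chiV {μ : ℕ} (q : Kv) (G : Matrix (Fin μ) (Fin μ) (RatFunc Kv)) : ℝ≥0∞ :=
  min 1 (Filter.liminf (fun n : ℕ =>
    (ENNReal.ofReal (matGaussNorm (Gseq q G n) / ‖qFactorial q n‖)) ^ (-(1 / (n : ℝ))))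
    Filter.atTop)

section GaussPart

variable {K : Type*} [NormedField K]

lemma pg_eq (P : Polynomial K) :
    polyGaussNorm P = Polynomial.gaussNorm (NormedField.toAbsoluteValue K) 1 P := by
  have hle : ∀ i, ‖P.coeff i‖ ≤ Polynomial.gaussNorm (NormedField.toAbsoluteValue K) 1 P := by
    intro i
    have := Polynomial.le_gaussNorm (NormedField.toAbsoluteValue K) P (c := 1) zero_le_one i
    simpa [NormedField.toAbsoluteValue] using this
  apply le_antisymm
  · exact ciSup_le hle
  · obtain ⟨i, hi⟩ := Polynomial.exists_eq_gaussNorm (NormedField.toAbsoluteValue K) 1 P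
    rw [hi]
    have : ‖P.coeff i‖ ≤ ⨆ i : ℕ, ‖P.coeff i‖ :=
      le_ciSup (f := fun i => ‖P.coeff i‖) ⟨_, by rintro _ ⟨j, rfl⟩; exact hle j⟩ i
    simpa [polyGaussNorm, NormedField.toAbsoluteValue] using this

lemma pg_coeff_le (P : Polynomial K) (i : ℕ) : ‖P.coeff i‖ ≤ polyGaussNorm P := by
  rw [pg_eq]
  have := Polynomial.le_gaussNorm (NormedField.toAbsoluteValue K) P (c := 1) zero_le_one i
  simpa [NormedField.toAbsoluteValue] using this

lemma pg_le (P : Polynomial K) (C : ℝ) (h : ∀ i, ‖P.coeff i‖ ≤ C) : polyGaussNorm P ≤ C :=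
  ciSup_le h

lemma pg_nonneg (P : Polynomial K) : 0 ≤ polyGaussNorm P :=
  (norm_nonneg _).trans (pg_coeff_le P 0)

lemma pg_zero : polyGaussNorm (0 : Polynomial K) = 0 := by
  rw [pg_eq]; simp

lemma pg_C (c : K) : polyGaussNorm (Polynomial.C c) = ‖c‖ := by
  rw [pg_eq]; simp [NormedField.toAbsoluteValue]

lemma pg_X : polyGaussNorm (Polynomial.X : Polynomial K) = 1 := by
  rw [pg_eq, ← Polynomial.monomial_one_one_eq_X]; simp

lemma pg_pos {P : Polynomial K} (h : P ≠ 0) : 0 < polyGaussNorm P := by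
  refine lt_of_lt_of_le ?_ (pg_coeff_le P P.natDegree)
  simpa using h

variable (hna : ∀ x y : K, ‖x + y‖ ≤ max ‖x‖ ‖y‖)

include hna

lemma pg_mul (P Q : Polynomial K) :
    polyGaussNorm (P * Q) = polyGaussNorm P * polyGaussNorm Q := by
  rw [pg_eq, pg_eq, pg_eq]
  exact Polynomial.gaussNorm_mul (v := NormedField.toAbsoluteValue K) (fun x y => hna x y) one_pos P Q

lemma pg_add (P Q : Polynomial K) :
    polyGaussNorm (P + Q) ≤ max (polyGaussNorm P) (polyGaussNorm Q) := by
  apply pg_le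
  intro i
  rw [Polynomial.coeff_add]
  exact (hna _ _).trans (max_le_max (pg_coeff_le _ _) (pg_coeff_le _ _))

omit hna in
lemma pg_neg (P : Polynomial K) : polyGaussNorm (-P) = polyGaussNorm P := by
  simp [polyGaussNorm]

lemma gn_div (P Q : Polynomial K) (hQ : Q ≠ 0) :
    gaussNorm (algebraMap (Polynomial K) (RatFunc K) P / algebraMap (Polynomial K) (RatFunc K) Q)
      = polyGaussNorm P / polyGaussNorm Q := by
  set f := algebraMap (Polynomial K) (RatFunc K) P / algebraMap (Polynomial K) (RatFunc K) Q with hf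
  have h1 : f.num * Q = P * f.denom := (RatFunc.num_mul_eq_mul_denom_iff hQ).2 hf
  have h2 := congrArg polyGaussNorm h1
  rw [pg_mul hna, pg_mul hna] at h2
  have := pg_pos hQ
  have := pg_pos f.denom_ne_zero
  unfold gaussNorm
  rw [div_eq_div_iff (by positivity) (by positivity)]
  exact h2

omit hna in
lemma gn_nonneg (f : RatFunc K) : 0 ≤ gaussNorm f := div_nonneg (pg_nonneg _) (pg_nonneg _)

omit hna in
lemma gn_zero : gaussNorm (0 : RatFunc K) = 0 := by simp [gaussNorm, pg_zero]

omit hna in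
lemma gn_one : gaussNorm (1 : RatFunc K) = 1 := by
  have : polyGaussNorm (1 : Polynomial K) = 1 := by
    rw [← Polynomial.C_1, pg_C]; simp
  simp [gaussNorm, this]

lemma gn_mul (f g : RatFunc K) : gaussNorm (f * g) = gaussNorm f * gaussNorm g := by
  conv_lhs => rw [← f.num_div_denom, ← g.num_div_denom, div_mul_div_comm, ← map_mul, ← map_mul]
  rw [gn_div hna _ _ (mul_ne_zero f.denom_ne_zero g.denom_ne_zero), pg_mul hna, pg_mul hna]
  unfold gaussNorm
  rw [div_mul_div_comm]

lemma gn_add (f g : RatFunc K) : gaussNorm (f + g) ≤ max (gaussNorm f) (gaussNorm g) := by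
  have hf : algebraMap (Polynomial K) (RatFunc K) f.denom ≠ 0 := by simp [RatFunc.denom_ne_zero]
  have hg : algebraMap (Polynomial K) (RatFunc K) g.denom ≠ 0 := by simp [RatFunc.denom_ne_zero]
  conv_lhs => rw [← f.num_div_denom, ← g.num_div_denom, div_add_div _ _ hf hg, ← map_mul, ← map_mul,
    ← map_mul, ← map_add]
  rw [gn_div hna _ _ (mul_ne_zero f.denom_ne_zero g.denom_ne_zero)]
  have h1 := pg_pos f.denom_ne_zero
  have h2 := pg_pos g.denom_ne_zero
  have := pg_add hna (f.num * g.denom) (f.denom * g.num)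
  rw [pg_mul hna, pg_mul hna] at this
  rw [pg_mul hna, div_le_iff₀ (by positivity)]
  refine this.trans ?_
  unfold gaussNorm
  apply max_le
  · refine le_trans (le_of_eq ?_) (mul_le_mul_of_nonneg_right (le_max_left _ _) (by positivity))
    field_simp
  · refine le_trans (le_of_eq ?_) (mul_le_mul_of_nonneg_right (le_max_right _ _) (by positivity))
    field_simp

lemma gn_neg (f : RatFunc K) : gaussNorm (-f) = gaussNorm f := by
  have h : -f = algebraMap (Polynomial K) (RatFunc K) (-f.num) /
      algebraMap (Polynomial K) (RatFunc K) f.denom := by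
    rw [map_neg, neg_div, f.num_div_denom]
  rw [h, gn_div hna _ _ f.denom_ne_zero, pg_neg]
  rfl

omit hna in
lemma pg_subst (q : K) (hq1 : ‖q‖ = 1) (P : Polynomial K) :
    polyGaussNorm (P.comp (Polynomial.C q * Polynomial.X)) = polyGaussNorm P := by
  unfold polyGaussNorm
  congr 1
  ext i
  rw [Polynomial.comp_C_mul_X_coeff]
  simp [hq1]

lemma pg_subst_sub (q : K) (hq1 : ‖q‖ = 1) (P : Polynomial K) :
    polyGaussNorm (P.comp (Polynomial.C q * Polynomial.X) - P) ≤ ‖q - 1‖ * polyGaussNorm P := by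
  have hpow : ∀ n : ℕ, ‖q ^ n - 1‖ ≤ ‖q - 1‖ := by
    intro n
    induction n with
    | zero => simp
    | succ n ih =>
      have : q ^ (n+1) - 1 = q * (q ^ n - 1) + (q - 1) := by ring
      rw [this]
      refine (hna _ _).trans (max_le ?_ le_rfl)
      rw [norm_mul, hq1, one_mul]; exact ih
  apply pg_le
  intro i
  rw [Polynomial.coeff_sub, Polynomial.comp_C_mul_X_coeff]
  have : P.coeff i * q ^ i - P.coeff i = (q ^ i - 1) * P.coeff i := by ring
  rw [this, norm_mul]
  gcongr
  · exact hpow i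
  · exact pg_coeff_le P i

omit hna in
lemma subst_ne_zero (q : K) (hq1 : ‖q‖ = 1) {P : Polynomial K} (hP : P ≠ 0) :
    P.comp (Polynomial.C q * Polynomial.X) ≠ 0 := by
  intro h
  have := pg_subst q hq1 P
  rw [h, pg_zero] at this
  exact (pg_pos hP).ne this

lemma gn_subst (q : K) (hq1 : ‖q‖ = 1) (f : RatFunc K) : gaussNorm (ratSubst q f) = gaussNorm f := by
  unfold ratSubst
  rw [gn_div hna _ _ (subst_ne_zero q hq1 f.denom_ne_zero), pg_subst q hq1, pg_subst q hq1]
  rfl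

lemma gn_qDeriv (q : K) (hq1 : ‖q‖ = 1) (hq : q ≠ 1) (f : RatFunc K) :
    gaussNorm (qDeriv q f) ≤ gaussNorm f := by
  have hs := subst_ne_zero q hq1 f.denom_ne_zero
  have hd := f.denom_ne_zero
  have hq0 : Polynomial.C (q - 1) ≠ 0 := Polynomial.C_ne_zero.2 (sub_ne_zero.2 hq)
  set P := f.num with hP
  set Q := f.denom with hQ
  set P' := P.comp (Polynomial.C q * Polynomial.X) with hP'
  set Q' := Q.comp (Polynomial.C q * Polynomial.X) with hQ'
  have hf : f = algebraMap (Polynomial K) (RatFunc K) P / algebraMap (Polynomial K) (RatFunc K) Q :=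
    f.num_div_denom.symm
  have e : qDeriv q f = algebraMap (Polynomial K) (RatFunc K) ((P' - P) * Q + -(P * (Q' - Q))) /
      algebraMap (Polynomial K) (RatFunc K) (Q' * Q * (Polynomial.C (q - 1) * Polynomial.X)) := by
    have a1 : algebraMap (Polynomial K) (RatFunc K) Q ≠ 0 := by simpa using hd
    have a2 : algebraMap (Polynomial K) (RatFunc K) Q' ≠ 0 := by simpa using hs
    unfold qDeriv ratSubst
    rw [← hP, ← hQ, ← hP', ← hQ', hf, div_sub_div _ _ a2 a1, div_div]
    simp only [map_mul, map_add, map_sub, map_neg, RatFunc.algebraMap_C, RatFunc.algebraMap_X]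
    congr 1
    ring
  rw [e, gn_div hna _ _ (mul_ne_zero (mul_ne_zero hs hd) (mul_ne_zero hq0 Polynomial.X_ne_zero))]
  simp only [pg_mul hna, pg_C, pg_X, pg_subst q hq1, hQ']
  have h1 := pg_pos hd
  have h2 : 0 < ‖q - 1‖ := norm_pos_iff.2 (sub_ne_zero.2 hq)
  rw [div_le_iff₀ (by positivity)]
  unfold gaussNorm
  rw [← hP, ← hQ]
  have key : polyGaussNorm ((P' - P) * Q + -(P * (Q' - Q))) ≤
      ‖q - 1‖ * polyGaussNorm P * polyGaussNorm Q := by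
    refine (pg_add hna _ _).trans (max_le ?_ ?_)
    · rw [pg_mul hna]
      gcongr
      exact pg_subst_sub hna q hq1 P
    · rw [pg_neg, pg_mul hna]
      have := mul_le_mul_of_nonneg_left (pg_subst_sub hna q hq1 Q) (pg_nonneg P)
      refine this.trans (le_of_eq (by ring))
  refine key.trans (le_of_eq ?_)
  field_simp

end GaussPart

section DynPart

variable {K : Type*} [NormedField K]
variable (hna : ∀ x y : K, ‖x + y‖ ≤ max ‖x‖ ‖y‖)

include hna

lemma gnw_add_le {f g : RatFunc K} {c C : ℝ} (hc : 0 ≤ c) (hf : gaussNorm f * c ≤ C)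
    (hg : gaussNorm g * c ≤ C) : gaussNorm (f + g) * c ≤ C := by
  refine (mul_le_mul_of_nonneg_right (gn_add hna f g) hc).trans ?_
  rw [max_mul_of_nonneg _ _ hc]
  exact max_le hf hg

lemma gnw_add_lt {f g : RatFunc K} {c C : ℝ} (hc : 0 ≤ c) (hf : gaussNorm f * c < C)
    (hg : gaussNorm g * c < C) : gaussNorm (f + g) * c < C := by
  refine (mul_le_mul_of_nonneg_right (gn_add hna f g) hc).trans_lt ?_
  rw [max_mul_of_nonneg _ _ hc]
  exact max_lt hf hg

lemma gnw_add_eq {f g : RatFunc K} {c C : ℝ} (hc : 0 ≤ c) (hf : gaussNorm f * c = C)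
    (hg : gaussNorm g * c < C) : gaussNorm (f + g) * c = C := by
  apply le_antisymm (gnw_add_le hna hc hf.le hg.le)
  by_contra h
  push Not at h
  have : gaussNorm (f + g + -g) * c < C := gnw_add_lt hna hc h (by rwa [gn_neg hna])
  rw [add_neg_cancel_right, hf] at this
  exact lt_irrefl _ this

lemma gnw_sum_le {ι : Type*} (s : Finset ι) {f : ι → RatFunc K} {c C : ℝ} (hc : 0 ≤ c)
    (hC : 0 ≤ C) (hf : ∀ j ∈ s, gaussNorm (f j) * c ≤ C) : gaussNorm (∑ j ∈ s, f j) * c ≤ C := by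
  classical
  induction s using Finset.induction_on with
  | empty => simpa [gn_zero] using hC
  | insert a s ha ih =>
    rw [Finset.sum_insert ha]
    exact gnw_add_le hna hc (hf a (by simp)) (ih fun j hj => hf j (by simp [hj]))

lemma gnw_sum_lt {ι : Type*} (s : Finset ι) {f : ι → RatFunc K} {c C : ℝ} (hc : 0 ≤ c)
    (hC : 0 < C) (hf : ∀ j ∈ s, gaussNorm (f j) * c < C) : gaussNorm (∑ j ∈ s, f j) * c < C := by
  classical
  induction s using Finset.induction_on with
  | empty => simpa [gn_zero] using hC
  | insert a s ha ih =>
    rw [Finset.sum_insert ha]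
    exact gnw_add_lt hna hc (hf a (by simp)) (ih fun j hj => hf j (by simp [hj]))

lemma gnw_sum_eq {ι : Type*} [Fintype ι] (k : ι) {f : ι → RatFunc K} {c C : ℝ} (hc : 0 ≤ c)
    (hC : 0 < C) (hk : gaussNorm (f k) * c = C) (hf : ∀ j, j ≠ k → gaussNorm (f j) * c < C) :
    gaussNorm (∑ j, f j) * c = C := by
  classical
  rw [← Finset.add_sum_erase Finset.univ f (Finset.mem_univ k)]
  exact gnw_add_eq hna hc hk (gnw_sum_lt hna _ hc hC fun j hj => hf j (Finset.ne_of_mem_erase hj))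

variable (q : K) (hq1 : ‖q‖ = 1) (hq : q ≠ 1) (μ : ℕ) (a : Fin μ → RatFunc K)
    (G : Matrix (Fin μ) (Fin μ) (RatFunc K))
    (hG : ∀ i j : Fin μ,
      G i j = if (j : ℕ) = μ - 1 then a i else if (i : ℕ) = (j : ℕ) + 1 then 1 else 0)
    (M : ℝ) (hM : 1 < M) (hA : ∀ i, gaussNorm (a i) ≤ M ^ (μ - (i : ℕ)))

include hq1 hG hM in
lemma term_le (v : Fin μ → RatFunc K) (i j : Fin μ) (h : gaussNorm (a i) ≤ M ^ (μ - (i : ℕ))) :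
    gaussNorm (G i j * ratSubst q (v j)) * M ^ (i : ℕ) ≤ M * (gaussNorm (v j) * M ^ (j : ℕ)) := by
  rw [gn_mul hna, gn_subst hna q hq1, hG]
  have hv := gn_nonneg (v j)
  have hM0 : 0 < M := by linarith
  split_ifs with h1 h2
  · have e : M ^ (μ - (i : ℕ)) * M ^ (i : ℕ) = M * M ^ (j : ℕ) := by
      rw [← pow_add, ← pow_succ']
      congr 1
      have := i.2
      omega
    calc gaussNorm (a i) * gaussNorm (v j) * M ^ (i : ℕ)
        ≤ M ^ (μ - (i : ℕ)) * gaussNorm (v j) * M ^ (i : ℕ) := by gcongr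
      _ = (M ^ (μ - (i : ℕ)) * M ^ (i : ℕ)) * gaussNorm (v j) := by ring
      _ = _ := by rw [e]; ring
  · rw [gn_one, h2, pow_succ]
    exact le_of_eq (by ring)
  · rw [gn_zero]; simp only [zero_mul]; positivity

include hq1 hG hM in
lemma term_lt (v : Fin μ → RatFunc K) (i j : Fin μ) (h : gaussNorm (a i) < M ^ (μ - (i : ℕ)))
    (h1 : (j : ℕ) = μ - 1) {B : ℝ} (hB : 0 < B) (hv : gaussNorm (v j) * M ^ (j : ℕ) ≤ B) :
    gaussNorm (G i j * ratSubst q (v j)) * M ^ (i : ℕ) < M * B := by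
  have hM0 : 0 < M := by linarith
  have hv0 := gn_nonneg (v j)
  rw [gn_mul hna, gn_subst hna q hq1, hG, if_pos h1]
  have e : M ^ (μ - (i : ℕ)) * M ^ (i : ℕ) = M * M ^ (j : ℕ) := by
    rw [← pow_add, ← pow_succ']
    congr 1
    have := i.2
    omega
  rcases hv0.eq_or_lt with h0 | h0
  · rw [← h0]; simp only [mul_zero, zero_mul]; positivity
  · calc gaussNorm (a i) * gaussNorm (v j) * M ^ (i : ℕ)
        < M ^ (μ - (i : ℕ)) * gaussNorm (v j) * M ^ (i : ℕ) := by gcongr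
      _ = (M ^ (μ - (i : ℕ)) * M ^ (i : ℕ)) * gaussNorm (v j) := by ring
      _ = M * (gaussNorm (v j) * M ^ (j : ℕ)) := by rw [e]; ring
      _ ≤ _ := by gcongr

include hq1 hG hM in
lemma term_eq (v : Fin μ → RatFunc K) (i j : Fin μ)
    (h : ((j : ℕ) = μ - 1 ∧ gaussNorm (a i) = M ^ (μ - (i : ℕ))) ∨
      ((j : ℕ) ≠ μ - 1 ∧ (i : ℕ) = (j : ℕ) + 1)) :
    gaussNorm (G i j * ratSubst q (v j)) * M ^ (i : ℕ) = M * (gaussNorm (v j) * M ^ (j : ℕ)) := by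
  rw [gn_mul hna, gn_subst hna q hq1, hG]
  rcases h with ⟨h1, h2⟩ | ⟨h1, h2⟩
  · have e : M ^ (μ - (i : ℕ)) * M ^ (i : ℕ) = M * M ^ (j : ℕ) := by
      rw [← pow_add, ← pow_succ']
      congr 1
      have := i.2
      omega
    rw [if_pos h1, h2, mul_right_comm, e]; ring
  · rw [if_neg h1, if_pos h2, gn_one, h2, pow_succ]; ring

include hq1 hG in
lemma term_zero (v : Fin μ → RatFunc K) (i j : Fin μ)
    (h1 : (j : ℕ) ≠ μ - 1) (h2 : (i : ℕ) ≠ (j : ℕ) + 1) :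
    gaussNorm (G i j * ratSubst q (v j)) * M ^ (i : ℕ) = 0 := by
  rw [gn_mul hna, gn_subst hna q hq1, hG, if_neg h1, if_neg h2, gn_zero]; simp

include hq1 hq hM in
lemma deriv_lt (v : Fin μ → RatFunc K) (i : Fin μ) {B : ℝ} (hB : 0 < B)
    (hv : gaussNorm (v i) * M ^ (i : ℕ) ≤ B) :
    gaussNorm (qDeriv q (v i)) * M ^ (i : ℕ) < M * B := by
  have hM0 : 0 < M := by linarith
  calc gaussNorm (qDeriv q (v i)) * M ^ (i : ℕ) ≤ gaussNorm (v i) * M ^ (i : ℕ) := by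
        gcongr; exact gn_qDeriv hna q hq1 hq _
    _ ≤ B := hv
    _ < M * B := by nlinarith

include hq1 hq hG hM hA in
lemma step_le (v : Fin μ → RatFunc K) {B : ℝ} (hB : 0 < B)
    (hv : ∀ i, gaussNorm (v i) * M ^ (i : ℕ) ≤ B) (i : Fin μ) :
    gaussNorm (∑ j, G i j * ratSubst q (v j) + qDeriv q (v i)) * M ^ (i : ℕ) ≤ M * B := by
  have hM0 : 0 < M := by linarith
  apply gnw_add_le hna (by positivity)
  · apply gnw_sum_le hna _ (by positivity) (by positivity)
    intro j _
    refine (term_le hna q hq1 μ a G hG M hM v i j (hA i)).trans ?_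
    have := hv j
    gcongr
  · exact (deriv_lt hna q hq1 hq μ M hM v i hB (hv i)).le

def DomInv (M : ℝ) (i0 : Fin μ) (v : Fin μ → RatFunc K) (B : ℝ) : Prop :=
  (∀ i, gaussNorm (v i) * M ^ (i : ℕ) ≤ B) ∧ (∃ k, i0 ≤ k ∧ gaussNorm (v k) * M ^ (k : ℕ) = B) ∧
    ∀ i, i < i0 → gaussNorm (v i) * M ^ (i : ℕ) < B

include hq1 hq hG hM hA in
lemma step_inv (i0 : Fin μ) (hi0 : gaussNorm (a i0) = M ^ (μ - (i0 : ℕ)))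
    (hmin : ∀ i, i < i0 → gaussNorm (a i) < M ^ (μ - (i : ℕ)))
    (v : Fin μ → RatFunc K) {B : ℝ} (hB : 0 < B) (hv : DomInv μ M i0 v B) :
    DomInv μ M i0 (fun i => ∑ j, G i j * ratSubst q (v j) + qDeriv q (v i)) (M * B) := by
  obtain ⟨hv1, ⟨k, hk, hkB⟩, hv3⟩ := hv
  have hM0 : 0 < M := by linarith
  have hMB : 0 < M * B := by positivity
  have hμ : 0 < μ := i0.pos
  refine ⟨step_le hna q hq1 hq μ a G hG M hM hA v hB hv1, ?_, ?_⟩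
  · have hlast : ((⟨μ - 1, by omega⟩ : Fin μ) : ℕ) = μ - 1 := rfl
    set l : Fin μ := ⟨μ - 1, by omega⟩ with hl
    rcases (hv1 l).eq_or_lt with h | h
    · refine ⟨i0, le_rfl, ?_⟩
      refine gnw_add_eq hna (by positivity) ?_ (deriv_lt hna q hq1 hq μ M hM v i0 hB (hv1 i0))
      refine gnw_sum_eq hna l (by positivity) hMB ?_ ?_
      · rw [term_eq hna q hq1 μ a G hG M hM v i0 l (Or.inl ⟨hlast, hi0⟩), h]
      · intro j hj
        have hj' : (j : ℕ) ≠ μ - 1 := fun h => hj (Fin.ext (by rw [h, hlast]))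
        by_cases h2 : (i0 : ℕ) = (j : ℕ) + 1
        · rw [term_eq hna q hq1 μ a G hG M hM v i0 j (Or.inr ⟨hj', h2⟩)]
          have : j < i0 := by rw [Fin.lt_def]; omega
          have := hv3 j this
          gcongr
        · rw [term_zero hna q hq1 μ a G hG M v i0 j hj' h2]; exact hMB
    · have hkl : (k : ℕ) ≠ μ - 1 := by
        intro h'
        have : k = l := Fin.ext (by rw [h', hlast])
        rw [this] at hkB
        linarith
      have hk2 := k.2
      refine ⟨⟨k + 1, by omega⟩, ?_, ?_⟩
      · rw [Fin.le_def] at hk ⊢; simp only; omega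
      · refine gnw_add_eq hna (by positivity) ?_ (deriv_lt hna q hq1 hq μ M hM v _ hB (hv1 _))
        refine gnw_sum_eq hna k (by positivity) hMB ?_ ?_
        · rw [term_eq hna q hq1 μ a G hG M hM v _ k (Or.inr ⟨hkl, rfl⟩), hkB]
        · intro j hj
          by_cases hj' : (j : ℕ) = μ - 1
          · have : j = l := Fin.ext (by rw [hj', hlast])
            refine (term_le hna q hq1 μ a G hG M hM v _ j (hA _)).trans_lt ?_
            rw [this]
            gcongr
          · rw [term_zero hna q hq1 μ a G hG M v _ j hj' ?_]
            · exact hMB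
            · simp only
              intro h'
              exact hj (Fin.ext (by omega))
  · intro i hi
    refine gnw_add_lt hna (by positivity) ?_ (deriv_lt hna q hq1 hq μ M hM v i hB (hv1 i))
    refine gnw_sum_lt hna _ (by positivity) hMB ?_
    intro j _
    by_cases hj' : (j : ℕ) = μ - 1
    · exact term_lt hna q hq1 μ a G hG M hM v i j (hmin i hi) hj' hB (hv1 j)
    · by_cases h2 : (i : ℕ) = (j : ℕ) + 1
      · rw [term_eq hna q hq1 μ a G hG M hM v i j (Or.inr ⟨hj', h2⟩)]
        have : j < i0 := by rw [Fin.lt_def] at hi ⊢; omega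
        have := hv3 j this
        gcongr
      · rw [term_zero hna q hq1 μ a G hG M v i j hj' h2]; exact hMB

omit hna in
lemma Gseq_succ_apply (n : ℕ) (i j : Fin μ) : Gseq q G (n + 1) i j =
    ∑ k, G i k * ratSubst q (Gseq q G n k j) + qDeriv q (Gseq q G n i j) := by
  simp [Gseq, Matrix.mul_apply]

include hq1 hq hG hM hA in
lemma Gseq_upper (n : ℕ) (i j : Fin μ) :
    gaussNorm (Gseq q G n i j) * M ^ (i : ℕ) ≤ M ^ n * M ^ (μ - 1) := by
  have hM0 : 0 < M := by linarith
  induction n generalizing i with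
  | zero =>
    have hi := i.2
    have h1 : M ^ (i : ℕ) ≤ M ^ (μ - 1) := pow_le_pow_right₀ hM.le (by omega)
    have h2 : gaussNorm ((1 : Matrix (Fin μ) (Fin μ) (RatFunc K)) i j) ≤ 1 := by
      rw [Matrix.one_apply]
      split_ifs
      · rw [gn_one]
      · rw [gn_zero]; exact zero_le_one
    rw [pow_zero]
    simp only [Gseq]
    gcongr
  | succ n ih =>
    rw [Gseq_succ_apply, pow_succ', mul_assoc]
    exact step_le hna q hq1 hq μ a G hG M hM hA (fun i => Gseq q G n i j) (by positivity) ih i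

include hq1 hq hG hM hA in
lemma Gseq_lower (i0 : Fin μ) (hi0 : gaussNorm (a i0) = M ^ (μ - (i0 : ℕ)))
    (hmin : ∀ i, i < i0 → gaussNorm (a i) < M ^ (μ - (i : ℕ))) (n : ℕ) :
    DomInv μ M i0 (fun i => Gseq q G n i ⟨μ - 1, by have := i0.2; omega⟩) (M ^ n * M ^ (μ - 1)) := by
  have hM0 : 0 < M := by linarith
  induction n with
  | zero =>
    refine ⟨fun i => Gseq_upper hna q hq1 hq μ a G hG M hM hA 0 i _, ⟨⟨μ - 1, by have := i0.2; omega⟩, ?_, ?_⟩, ?_⟩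
    · rw [Fin.le_def]; simp only; have := i0.2; omega
    · simp [Gseq, gn_one]
    · intro i hi
      have : i ≠ ⟨μ - 1, by have := i0.2; omega⟩ := by
        intro h
        rw [Fin.lt_def, h] at hi
        simp only at hi
        have := i0.2; omega
      simp only [Gseq]
      rw [Matrix.one_apply, if_neg this, gn_zero]
      simp only [zero_mul]; positivity
  | succ n ih =>
    have := step_inv hna q hq1 hq μ a G hG M hM hA i0 hi0 hmin _ (by positivity) ih
    rw [pow_succ', mul_assoc]
    convert this using 2
    rw [Gseq_succ_apply]

include hq1 hq hG hM hA in
lemma mat_bounds (i0 : Fin μ) (hi0 : gaussNorm (a i0) = M ^ (μ - (i0 : ℕ)))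
    (hmin : ∀ i, i < i0 → gaussNorm (a i) < M ^ (μ - (i : ℕ))) (n : ℕ) :
    M ^ n ≤ matGaussNorm (Gseq q G n) ∧ matGaussNorm (Gseq q G n) ≤ M ^ n * M ^ (μ - 1) := by
  have hM0 : 0 < M := by linarith
  have : Nonempty (Fin μ) := ⟨i0⟩
  have hle : ∀ i j, gaussNorm (Gseq q G n i j) ≤ matGaussNorm (Gseq q G n) := by
    intro i j
    refine (le_ciSup (f := fun j => gaussNorm (Gseq q G n i j)) (Set.finite_range _).bddAbove j).trans ?_
    exact le_ciSup (f := fun i => ⨆ j, gaussNorm (Gseq q G n i j)) (Set.finite_range _).bddAbove i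
  constructor
  · obtain ⟨k, _, hk⟩ := (Gseq_lower hna q hq1 hq μ a G hG M hM hA i0 hi0 hmin n).2.1
    refine le_trans ?_ (hle k ⟨μ - 1, by have := i0.2; omega⟩)
    have h1 : M ^ (k : ℕ) ≤ M ^ (μ - 1) := pow_le_pow_right₀ hM.le (by have := k.2; omega)
    have h2 : (0:ℝ) < M ^ (μ - 1) := by positivity
    refine le_of_mul_le_mul_right ?_ h2
    rw [← hk]
    exact mul_le_mul_of_nonneg_left h1 (gn_nonneg _)
  · refine ciSup_le fun i => ciSup_le fun j => ?_
    refine le_trans ?_ (Gseq_upper hna q hq1 hq μ a G hG M hM hA n i j)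
    exact le_mul_of_one_le_right (gn_nonneg _) (one_le_pow₀ hM.le)

end DynPart

section FactPart

variable {K : Type*} [NormedField K]
variable (hna : ∀ x y : K, ‖x + y‖ ≤ max ‖x‖ ‖y‖)
variable (p : ℕ) (hp : Nat.Prime p) (hpv : ‖(p : K)‖ < 1)

include hna hp hpv

lemma norm_nat_coprime (m : ℕ) (hm : Nat.Coprime p m) : ‖(m : K)‖ = 1 := by
  have : IsUltrametricDist K := IsUltrametricDist.isUltrametricDist_of_forall_norm_add_le_max_norm hna
  apply le_antisymm (IsUltrametricDist.norm_natCast_le_one K m)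
  obtain ⟨x, y, hxy⟩ := Nat.isCoprime_iff_coprime.2 hm
  have h : (x : K) * p + y * m = 1 := by exact_mod_cast congrArg (Int.cast : ℤ → K) hxy
  have h1 := hna ((x : K) * p) (y * m)
  rw [h, norm_one, norm_mul, norm_mul] at h1
  have hx := IsUltrametricDist.norm_intCast_le_one K x
  have hy := IsUltrametricDist.norm_intCast_le_one K y
  have h2 : ‖(x : K)‖ * ‖(p : K)‖ < 1 := by
    have := norm_nonneg (p : K)
    nlinarith
  rcases le_max_iff.1 h1 with h3 | h3
  · linarith
  · have := norm_nonneg (m : K)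
    nlinarith

lemma norm_nat_eq (m : ℕ) (hm : m ≠ 0) : ‖(m : K)‖ = ‖(p : K)‖ ^ padicValNat p m := by
  obtain ⟨k, n', hn', rfl⟩ := Nat.exists_eq_pow_mul_and_not_dvd hm p hp.ne_one
  have := Fact.mk hp
  have hn0 : n' ≠ 0 := by rintro rfl; simp at hn'
  rw [padicValNat.mul (pow_ne_zero _ hp.ne_zero) hn0, padicValNat.prime_pow,
    padicValNat.eq_zero_of_not_dvd hn', Nat.cast_mul, norm_mul,
    norm_nat_coprime hna p hp hpv n' ((Nat.Prime.coprime_iff_not_dvd hp).2 hn')]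
  simp

variable (hp0 : 0 < ‖(p : K)‖) (q : K) (hq : q ≠ 1)
  (hdw : ‖q - 1‖ < ‖(p : K)‖ ^ ((1 : ℝ) / ((p : ℝ) - 1)))

include hp0 hdw

lemma pow_lt_norm (k : ℕ) (hk : k ≠ 0) : ‖q - 1‖ ^ k < ‖((k + 1 : ℕ) : K)‖ := by
  have hp2 : (0:ℝ) < (p:ℝ) - 1 := by
    have : (2:ℝ) ≤ p := by exact_mod_cast hp.two_le
    linarith
  rw [norm_nat_eq hna p hp hpv (k + 1) (by omega)]
  set v := padicValNat p (k + 1) with hv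
  have h1 : p ^ v ≤ k + 1 := Nat.le_of_dvd (by omega) pow_padicValNat_dvd
  have h2 : (1:ℝ) + v * ((p:ℝ) - 1) ≤ (p : ℝ) ^ v := by
    have := one_add_mul_le_pow (a := (p:ℝ) - 1) (by linarith) v
    simpa using this
  have h3 : (p:ℝ) ^ v ≤ k + 1 := by exact_mod_cast h1
  calc ‖q - 1‖ ^ k < (‖(p : K)‖ ^ ((1 : ℝ) / ((p : ℝ) - 1))) ^ k :=
        pow_lt_pow_left₀ hdw (norm_nonneg _) hk
    _ = ‖(p : K)‖ ^ ((k : ℝ) / ((p : ℝ) - 1)) := by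
        rw [← Real.rpow_natCast, ← Real.rpow_mul hp0.le]
        congr 1; ring
    _ ≤ ‖(p : K)‖ ^ (v : ℝ) := by
        apply Real.rpow_le_rpow_of_exponent_ge hp0 hpv.le
        rw [le_div_iff₀ hp2]
        linarith
    _ = _ := Real.rpow_natCast _ _

include hq

omit hna hp hpv hp0 hdw in
lemma qNat_expand (m : ℕ) : qNat q m = ∑ k ∈ Finset.range m, (m.choose (k + 1) : K) * (q - 1) ^ k := by
  have ht : q - 1 ≠ 0 := sub_ne_zero.2 hq
  apply mul_right_cancel₀ ht
  unfold qNat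
  rw [geom_sum_mul]
  have h := add_pow (q - 1) 1 m
  rw [Finset.sum_range_succ'] at h
  simp only [sub_add_cancel, one_pow, mul_one, pow_zero, Nat.choose_zero_right, Nat.cast_one] at h
  rw [h, add_sub_cancel_right, Finset.sum_mul]
  refine Finset.sum_congr rfl fun k _ => ?_
  rw [pow_succ]; ring

lemma norm_qNat (m : ℕ) (hm : m ≠ 0) : ‖qNat q m‖ = ‖(m : K)‖ := by
  have : IsUltrametricDist K := IsUltrametricDist.isUltrametricDist_of_forall_norm_add_le_max_norm hna
  have hm0 : 0 < ‖(m : K)‖ := by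
    rw [norm_nat_eq hna p hp hpv m hm]; positivity
  obtain ⟨m, rfl⟩ := Nat.exists_eq_succ_of_ne_zero hm
  rw [qNat_expand q hq]
  have hterm : ∀ k, k ≠ 0 → ‖((m + 1).choose (k + 1) : K) * (q - 1) ^ k‖ < ‖((m + 1 : ℕ) : K)‖ := by
    intro k hk
    have h1 := pow_lt_norm hna p hp hpv hp0 q hdw k hk
    have h2 := congrArg (fun n : ℕ => ‖(n : K)‖) (Nat.add_one_mul_choose_eq m k)
    simp only [Nat.cast_mul, norm_mul] at h2
    have h3 : ‖(m.choose k : K)‖ ≤ 1 := IsUltrametricDist.norm_natCast_le_one K _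
    rw [norm_mul, norm_pow]
    have h4 : 0 ≤ ‖((m + 1).choose (k + 1) : K)‖ := norm_nonneg _
    rcases h4.eq_or_lt with h5 | h5
    · rw [← h5, zero_mul]; exact hm0
    · calc _ < ‖((m + 1).choose (k + 1) : K)‖ * ‖((k + 1 : ℕ) : K)‖ := by gcongr
        _ = ‖((m + 1 : ℕ) : K)‖ * ‖(m.choose k : K)‖ := h2.symm
        _ ≤ _ := mul_le_of_le_one_right (norm_nonneg _) h3
  have hn : IsNonarchimedean (fun x : K => ‖x‖) := fun x y => hna x y
  have := IsNonarchimedean.apply_sum_eq_of_lt hn (s := Finset.range (m + 1))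
    (k := 0) (l := fun k => ((m + 1).choose (k + 1) : K) * (q - 1) ^ k) (by simp) (by simp) (by
      intro k _ hk
      simpa using hterm k hk)
  simpa using this

lemma norm_qFactorial (n : ℕ) : ‖qFactorial q n‖ = ‖(p : K)‖ ^ padicValNat p n.factorial := by
  rw [← norm_nat_eq hna p hp hpv _ n.factorial_ne_zero]
  induction n with
  | zero => simp [qFactorial]
  | succ n ih =>
    rw [qFactorial, norm_mul, ih, norm_qNat hna p hp hpv hp0 q hq hdw _ (by omega),
      Nat.factorial_succ, Nat.cast_mul, norm_mul, mul_comm]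

omit hna hpv hp0 hdw hq in
lemma digits_tendsto :
    Tendsto (fun n : ℕ => ((Nat.digits p n).sum : ℝ) / n) atTop (nhds 0) := by
  have h1 : Tendsto (fun n : ℕ => Real.log n / n) atTop (nhds 0) := by
    have := Real.isLittleO_log_id_atTop.tendsto_div_nhds_zero.comp tendsto_natCast_atTop_atTop
    simpa [Function.comp_def] using this
  have h2 : Tendsto (fun n : ℕ => (1:ℝ) / n) atTop (nhds 0) := tendsto_one_div_atTop_nhds_zero_nat
  have h3 : Tendsto (fun n : ℕ => (p : ℝ) * (Real.log n / n / Real.log p + 1 / n)) atTop (nhds 0) := by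
    have := ((h1.div_const (Real.log p)).add h2).const_mul (p : ℝ)
    simpa using this
  refine tendsto_of_tendsto_of_tendsto_of_le_of_le' tendsto_const_nhds h3 ?_ ?_
  · exact Eventually.of_forall fun n => by positivity
  · filter_upwards [eventually_ge_atTop 1] with n hn
    have hn0 : (0:ℝ) < n := by exact_mod_cast hn
    have a1 : (Nat.digits p n).sum ≤ (Nat.digits p n).length * p := by
      have := List.sum_le_card_nsmul (Nat.digits p n) p
        (fun d hd => (Nat.digits_lt_base hp.one_lt hd).le)
      simpa using this
    rw [Nat.length_digits p n hp.one_lt (by omega)] at a1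
    have a2 : ((Nat.digits p n).sum : ℝ) ≤ ((Nat.log p n : ℝ) + 1) * p := by exact_mod_cast a1
    have a3 : (Nat.log p n : ℝ) ≤ Real.log n / Real.log p := by
      have := Real.natLog_le_logb n p
      simpa [Real.logb] using this
    rw [div_le_iff₀ hn0]
    have hp1 : 0 < Real.log p := Real.log_pos (by exact_mod_cast hp.one_lt)
    calc _ ≤ ((Nat.log p n : ℝ) + 1) * p := a2
      _ ≤ (Real.log n / Real.log p + 1) * p := by gcongr
      _ = _ := by field_simp

lemma qFactorial_root :
    Tendsto (fun n : ℕ => ‖qFactorial q n‖ ^ (1 / (n : ℝ))) atTop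
      (nhds (‖(p : K)‖ ^ ((1 : ℝ) / ((p : ℝ) - 1)))) := by
  have hp2 : (0:ℝ) < (p:ℝ) - 1 := by
    have : (2:ℝ) ≤ p := by exact_mod_cast hp.two_le
    linarith
  have := Fact.mk hp
  have h : Tendsto (fun n : ℕ => (1 - ((Nat.digits p n).sum : ℝ) / n) / ((p:ℝ) - 1)) atTop
      (nhds ((1 : ℝ) / ((p : ℝ) - 1))) := by
    have := ((digits_tendsto p hp).const_sub 1).div_const ((p:ℝ) - 1)
    simpa using this
  have h' := (tendsto_const_nhds (x := ‖(p : K)‖)).rpow h (Or.inl hp0.ne')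
  refine h'.congr' ?_
  filter_upwards [eventually_ge_atTop 1] with n hn
  have hn0 : (0:ℝ) < n := by exact_mod_cast hn
  rw [norm_qFactorial hna p hp hpv hp0 q hq hdw, ← Real.rpow_natCast, ← Real.rpow_mul hp0.le]
  congr 1
  have e := sub_one_mul_padicValNat_factorial (p := p) n
  have hs : (Nat.digits p n).sum ≤ n := Nat.digit_sum_le p n
  have e' : ((p:ℝ) - 1) * (padicValNat p n.factorial : ℝ) = n - ((Nat.digits p n).sum : ℝ) := by
    have := congrArg (Nat.cast : ℕ → ℝ) e
    rw [Nat.cast_mul, Nat.cast_sub hs, Nat.cast_sub hp.one_le, Nat.cast_one] at this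
    exact this
  field_simp
  linarith

end FactPart
/-- The q-analogue of the Dwork-Frobenius theorem (case κ_v = 1). -/
theorem q_dwork_frobenius
    {Kv : Type*} [NontriviallyNormedField Kv] [CompleteSpace Kv]
    (hna : ∀ x y : Kv, ‖x + y‖ ≤ max ‖x‖ ‖y‖)
    (p : ℕ) (hp : Nat.Prime p) (hpv : ‖(p : Kv)‖ < 1)
    (q : Kv) (hq1 : ‖q‖ = 1) (hqru : ∀ m : ℕ, 0 < m → q ^ m ≠ 1)
    (κ : ℕ) (hκpos : 0 < κ) (hκlt : ‖1 - q ^ κ‖ < 1)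
    (hκmin : ∀ m : ℕ, 0 < m → ‖1 - q ^ m‖ < 1 → κ ≤ m)
    (hdw : ‖1 - q ^ κ‖ < ‖(p : Kv)‖ ^ ((1 : ℝ) / ((p : ℝ) - 1)))
    (hκone : κ = 1)
    (μ : ℕ) (hμ : 1 ≤ μ) (a : Fin μ → RatFunc Kv)
    (G : Matrix (Fin μ) (Fin μ) (RatFunc Kv))
    (hG : ∀ i j : Fin μ,
      G i j = if (j : ℕ) = μ - 1 then a i else if (i : ℕ) = (j : ℕ) + 1 then 1 else 0)
    (hbig : 1 < ⨆ i : Fin μ, gaussNorm (a i)) :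
    chiV q G =
      ENNReal.ofReal (‖(p : Kv)‖ ^ ((1 : ℝ) / ((p : ℝ) - 1)) /
        ⨆ i : Fin μ, gaussNorm (a i) ^ ((1 : ℝ) / ((μ : ℝ) - ((i : ℕ) : ℝ)))) := by
  subst hκone
  rw [pow_one, norm_sub_rev] at hdw
  have hq : q ≠ 1 := by simpa using hqru 1 one_pos
  have hp2 : (0:ℝ) < (p:ℝ) - 1 := by
    have : (2:ℝ) ≤ p := by exact_mod_cast hp.two_le
    linarith
  have hp0 : 0 < ‖(p : Kv)‖ := by
    rcases (norm_nonneg (p : Kv)).eq_or_lt with h | h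
    · rw [← h, Real.zero_rpow (by positivity)] at hdw
      exact absurd hdw (not_lt.2 (norm_nonneg _))
    · exact h
  set r := ‖(p : Kv)‖ ^ ((1 : ℝ) / ((p : ℝ) - 1)) with hr
  have hr0 : 0 < r := Real.rpow_pos_of_pos hp0 _
  have hr1 : r < 1 := Real.rpow_lt_one hp0.le hpv (by positivity)
  have : Nonempty (Fin μ) := ⟨⟨0, hμ⟩⟩
  set M := ⨆ i : Fin μ, gaussNorm (a i) ^ ((1 : ℝ) / ((μ : ℝ) - ((i : ℕ) : ℝ))) with hMdef
  have hdi : ∀ i : Fin μ, (μ : ℝ) - ((i : ℕ) : ℝ) = ((μ - (i : ℕ) : ℕ) : ℝ) := by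
    intro i; rw [Nat.cast_sub i.2.le]
  have hdi0 : ∀ i : Fin μ, (0:ℝ) < ((μ - (i : ℕ) : ℕ) : ℝ) := by
    intro i; exact_mod_cast Nat.sub_pos_of_lt i.2
  have hleM : ∀ i : Fin μ, gaussNorm (a i) ^ ((1 : ℝ) / ((μ : ℝ) - ((i : ℕ) : ℝ))) ≤ M := by
    intro i
    exact le_ciSup (f := fun i : Fin μ => gaussNorm (a i) ^ ((1 : ℝ) / ((μ : ℝ) - ((i : ℕ) : ℝ))))
      (Set.finite_range _).bddAbove i
  have hM : 1 < M := by
    obtain ⟨i, hi⟩ := exists_lt_of_lt_ciSup hbig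
    refine lt_of_lt_of_le ?_ (hleM i)
    apply Real.one_lt_rpow hi
    rw [hdi]
    exact one_div_pos.2 (hdi0 i)
  have hM0 : 0 < M := by linarith
  have hpow : ∀ i : Fin μ, gaussNorm (a i) =
      (gaussNorm (a i) ^ ((1 : ℝ) / ((μ : ℝ) - ((i : ℕ) : ℝ)))) ^ (μ - (i : ℕ)) := by
    intro i
    rw [hdi, ← Real.rpow_natCast, ← Real.rpow_mul (gn_nonneg _),
      one_div_mul_cancel (hdi0 i).ne', Real.rpow_one]
  have hA : ∀ i, gaussNorm (a i) ≤ M ^ (μ - (i : ℕ)) := by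
    intro i
    rw [hpow i]
    exact pow_le_pow_left₀ (Real.rpow_nonneg (gn_nonneg _) _) (hleM i) _
  obtain ⟨i0, hi0, hmin⟩ : ∃ i0, gaussNorm (a i0) = M ^ (μ - (i0 : ℕ)) ∧
      ∀ i, i < i0 → gaussNorm (a i) < M ^ (μ - (i : ℕ)) := by
    obtain ⟨i1, hi1⟩ := exists_eq_ciSup_of_finite
      (f := fun i : Fin μ => gaussNorm (a i) ^ ((1 : ℝ) / ((μ : ℝ) - ((i : ℕ) : ℝ))))
    have hi1' : gaussNorm (a i1) = M ^ (μ - (i1 : ℕ)) := by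
      rw [hpow i1, hMdef, ← hi1]
    obtain ⟨i0, h0, h1⟩ := WellFounded.has_min (wellFounded_lt (α := Fin μ))
      {i | gaussNorm (a i) = M ^ (μ - (i : ℕ))} ⟨i1, hi1'⟩
    exact ⟨i0, h0, fun i hi => lt_of_le_of_ne (hA i) fun h => h1 i h hi⟩
  have hb := mat_bounds hna q hq1 hq μ a G hG M hM hA i0 hi0 hmin
  have hF := qFactorial_root hna p hp hpv hp0 q hq hdw
  have hF0 : ∀ n, 0 < ‖qFactorial q n‖ := by
    intro n
    rw [norm_qFactorial hna p hp hpv hp0 q hq hdw]; positivity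
  have hD : Tendsto (fun n : ℕ => M * (M ^ (μ - 1)) ^ (1 / (n : ℝ))) atTop (nhds M) := by
    have h := (tendsto_const_nhds (x := M ^ (μ - 1))).rpow tendsto_one_div_atTop_nhds_zero_nat
      (Or.inl (by positivity))
    have := h.const_mul M
    simpa using this
  have hroot : ∀ n : ℕ, 1 ≤ n → (M ^ n) ^ (1 / (n : ℝ)) = M := by
    intro n hn
    have hn0 : (n : ℝ) ≠ 0 := by positivity
    rw [← Real.rpow_natCast, ← Real.rpow_mul hM0.le, mul_one_div_cancel hn0, Real.rpow_one]
  have hAroot : Tendsto (fun n : ℕ => matGaussNorm (Gseq q G n) ^ (1 / (n : ℝ))) atTop (nhds M) := by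
    refine tendsto_of_tendsto_of_tendsto_of_le_of_le' tendsto_const_nhds hD ?_ ?_
    · filter_upwards [eventually_ge_atTop 1] with n hn
      conv_lhs => rw [← hroot n hn]
      exact Real.rpow_le_rpow (by positivity) (hb n).1 (by positivity)
    · filter_upwards [eventually_ge_atTop 1] with n hn
      conv_rhs => arg 1; rw [← hroot n hn]
      rw [← Real.mul_rpow (by positivity) (by positivity)]
      exact Real.rpow_le_rpow ((by positivity : (0:ℝ) ≤ M ^ n).trans (hb n).1) (hb n).2 (by positivity)
  have hlim : Tendsto (fun n : ℕ =>
      (ENNReal.ofReal (matGaussNorm (Gseq q G n) / ‖qFactorial q n‖)) ^ (-(1 / (n : ℝ))))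
      atTop (nhds (ENNReal.ofReal (r / M))) := by
    refine (ENNReal.tendsto_ofReal (hF.div hAroot hM0.ne')).congr' ?_
    filter_upwards with n
    have hm0 : 0 < matGaussNorm (Gseq q G n) := (by positivity : (0:ℝ) < M ^ n).trans_le (hb n).1
    rw [ENNReal.ofReal_rpow_of_pos (div_pos hm0 (hF0 n)), Real.rpow_neg (by have := hF0 n; positivity),
      Real.div_rpow hm0.le (hF0 n).le, inv_div]
    rfl
  unfold chiV
  rw [hlim.liminf_eq]
  apply min_eq_right
  rw [ENNReal.ofReal_le_one]
  rw [div_le_one hM0]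
  linarith
end
end

section
/- Assume the local setting. Let G(x) be a μ×μ matrix with entries in K_v(x), define G_n and χ_v as usual, and set h(n) = max_{0≤s≤n} log|G_s(x)/[s]_q!|_{v,Gauss}. Then the sequence (h(n)/n)_{n≥1} converges, and its limit equals log(1/χ_v). -/
open Filter
open scoped ENNReal

noncomputable section

variable {Kv : Type*} [NormedField Kv]

section Gauss
open Polynomial

theorem polyGauss_eq (P : Kv[X]) :
    polyGaussNorm P = P.gaussNorm (NormedField.toAbsoluteValue Kv) 1 := by
  apply le_antisymm
  · refine ciSup_le fun i => ?_
    have := P.le_gaussNorm (NormedField.toAbsoluteValue Kv) zero_le_one i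
    rw [one_pow, mul_one] at this
    exact this
  · obtain ⟨i, hi⟩ := P.exists_eq_gaussNorm (NormedField.toAbsoluteValue Kv) 1
    rw [hi]
    have : BddAbove (Set.range fun i => ‖P.coeff i‖) := by
      refine ⟨P.gaussNorm (NormedField.toAbsoluteValue Kv) 1, ?_⟩
      rintro _ ⟨i, rfl⟩
      have := P.le_gaussNorm (NormedField.toAbsoluteValue Kv) zero_le_one i
      rw [one_pow, mul_one] at this
      exact this
    have := le_ciSup this i
    simpa using! this

theorem polyGauss_nonneg (P : Kv[X]) : 0 ≤ polyGaussNorm P :=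
  Real.iSup_nonneg fun _ => norm_nonneg _

theorem coeff_le_polyGauss (P : Kv[X]) (i : ℕ) : ‖P.coeff i‖ ≤ polyGaussNorm P := by
  rw [polyGauss_eq]
  have := P.le_gaussNorm (NormedField.toAbsoluteValue Kv) zero_le_one i
  rw [one_pow, mul_one] at this
  exact this

theorem isna (hna : ∀ x y : Kv, ‖x + y‖ ≤ max ‖x‖ ‖y‖) :
    IsNonarchimedean (NormedField.toAbsoluteValue Kv) := fun x y => hna x y

theorem polyGauss_mul (hna : ∀ x y : Kv, ‖x + y‖ ≤ max ‖x‖ ‖y‖) (P Q : Kv[X]) :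
    polyGaussNorm (P * Q) = polyGaussNorm P * polyGaussNorm Q := by
  simp only [polyGauss_eq]
  exact Polynomial.gaussNorm_mul (isna hna) one_pos P Q

theorem polyGauss_add (hna : ∀ x y : Kv, ‖x + y‖ ≤ max ‖x‖ ‖y‖) (P Q : Kv[X]) :
    polyGaussNorm (P + Q) ≤ max (polyGaussNorm P) (polyGaussNorm Q) := by
  simp only [polyGauss_eq]
  exact Polynomial.isNonarchimedean_gaussNorm _ (isna hna) zero_le_one P Q

theorem polyGauss_pos {P : Kv[X]} (h : P ≠ 0) : 0 < polyGaussNorm P := by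
  refine lt_of_le_of_ne (polyGauss_nonneg P) fun h0 => h ?_
  ext i
  have := coeff_le_polyGauss P i
  rw [← h0] at this
  simpa using this

theorem polyGauss_C (c : Kv) : polyGaussNorm (C c) = ‖c‖ := by
  rw [polyGauss_eq, Polynomial.gaussNorm_C]; rfl

theorem polyGauss_X : polyGaussNorm (X : Kv[X]) = 1 := by
  rw [polyGauss_eq, ← Polynomial.monomial_one_one_eq_X, Polynomial.gaussNorm_monomial]; simp

theorem polyGauss_comp {q : Kv} (hq1 : ‖q‖ = 1) (P : Kv[X]) :
    polyGaussNorm (P.comp (C q * X)) = polyGaussNorm P := by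
  unfold polyGaussNorm
  congr 1; ext i
  rw [Polynomial.comp_C_mul_X_coeff, norm_mul, norm_pow, hq1]; simp

theorem gauss_div (hna : ∀ x y : Kv, ‖x + y‖ ≤ max ‖x‖ ‖y‖) (P Q : Kv[X]) (hQ : Q ≠ 0) :
    gaussNorm (algebraMap Kv[X] (RatFunc Kv) P / algebraMap Kv[X] (RatFunc Kv) Q) =
      polyGaussNorm P / polyGaussNorm Q := by
  set f := algebraMap Kv[X] (RatFunc Kv) P / algebraMap Kv[X] (RatFunc Kv) Q with hf
  have hd : f.denom ≠ 0 := f.denom_ne_zero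
  have h1 : f.num * Q = P * f.denom := by
    apply RatFunc.algebraMap_injective Kv
    have hQ' := RatFunc.algebraMap_ne_zero hQ
    have hd' := RatFunc.algebraMap_ne_zero hd
    rw [map_mul, map_mul]
    have := f.num_div_denom
    rw [div_eq_iff hd'] at this
    rw [this, hf]
    field_simp
  have h2 := congrArg polyGaussNorm h1
  rw [polyGauss_mul hna, polyGauss_mul hna] at h2
  unfold _root_.gaussNorm
  rw [div_eq_div_iff (polyGauss_pos hd).ne' (polyGauss_pos hQ).ne', h2]

theorem gauss_nonneg (f : RatFunc Kv) : 0 ≤ gaussNorm f :=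
  div_nonneg (polyGauss_nonneg _) (polyGauss_nonneg _)

theorem gauss_poly (hna : ∀ x y : Kv, ‖x + y‖ ≤ max ‖x‖ ‖y‖) (P : Kv[X]) :
    gaussNorm (algebraMap Kv[X] (RatFunc Kv) P) = polyGaussNorm P := by
  have := gauss_div hna P 1 one_ne_zero
  rw [map_one, div_one] at this
  rw [this, ← Polynomial.C_1, polyGauss_C]; simp

theorem gauss_mul (hna : ∀ x y : Kv, ‖x + y‖ ≤ max ‖x‖ ‖y‖) (f g : RatFunc Kv) :
    gaussNorm (f * g) = gaussNorm f * gaussNorm g := by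
  have hd := f.denom_ne_zero
  have hd' := g.denom_ne_zero
  conv_lhs => rw [← f.num_div_denom, ← g.num_div_denom]
  rw [div_mul_div_comm, ← map_mul, ← map_mul, gauss_div hna _ _ (mul_ne_zero hd hd'),
    polyGauss_mul hna, polyGauss_mul hna, ← div_mul_div_comm]
  rfl

theorem gauss_add (hna : ∀ x y : Kv, ‖x + y‖ ≤ max ‖x‖ ‖y‖) (f g : RatFunc Kv) :
    gaussNorm (f + g) ≤ max (gaussNorm f) (gaussNorm g) := by
  have hd := f.denom_ne_zero
  have hd' := g.denom_ne_zero
  conv_lhs => rw [← f.num_div_denom, ← g.num_div_denom]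
  rw [div_add_div _ _ (RatFunc.algebraMap_ne_zero hd) (RatFunc.algebraMap_ne_zero hd'),
    ← map_mul, ← map_mul, ← map_mul, ← map_add,
    gauss_div hna _ _ (mul_ne_zero hd hd'), polyGauss_mul hna]
  have p1 := polyGauss_pos hd
  have p2 := polyGauss_pos hd'
  refine (div_le_div_of_nonneg_right (polyGauss_add hna _ _) (mul_pos p1 p2).le).trans ?_
  rw [polyGauss_mul hna, polyGauss_mul hna, ← max_div_div_right (mul_pos p1 p2).le]
  apply le_of_eq
  congr 1
  · rw [mul_div_mul_right _ _ p2.ne']; rfl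
  · rw [mul_div_mul_left _ _ p1.ne']; rfl

theorem gauss_zero : gaussNorm (0 : RatFunc Kv) = 0 := by
  simp [_root_.gaussNorm, polyGaussNorm]

theorem gauss_eq_zero {f : RatFunc Kv} (h : gaussNorm f = 0) : f = 0 := by
  by_contra hf
  have := polyGauss_pos (RatFunc.num_ne_zero hf)
  exact (div_pos this (polyGauss_pos f.denom_ne_zero)).ne' h

theorem gauss_one (hna : ∀ x y : Kv, ‖x + y‖ ≤ max ‖x‖ ‖y‖) : gaussNorm (1 : RatFunc Kv) = 1 := by
  rw [← map_one (algebraMap Kv[X] (RatFunc Kv)), gauss_poly hna, ← Polynomial.C_1, polyGauss_C]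
  simp

theorem gauss_C (hna : ∀ x y : Kv, ‖x + y‖ ≤ max ‖x‖ ‖y‖) (c : Kv) :
    gaussNorm (RatFunc.C c) = ‖c‖ := by
  rw [← RatFunc.algebraMap_C, gauss_poly hna, polyGauss_C]

theorem gauss_smul (hna : ∀ x y : Kv, ‖x + y‖ ≤ max ‖x‖ ‖y‖) (c : Kv) (f : RatFunc Kv) :
    gaussNorm (c • f) = ‖c‖ * gaussNorm f := by
  rw [RatFunc.smul_eq_C_mul, gauss_mul hna, gauss_C hna]

theorem gauss_X (hna : ∀ x y : Kv, ‖x + y‖ ≤ max ‖x‖ ‖y‖) :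
    gaussNorm (RatFunc.X : RatFunc Kv) = 1 := by
  rw [← RatFunc.algebraMap_X, gauss_poly hna, polyGauss_X]

theorem gauss_sum (hna : ∀ x y : Kv, ‖x + y‖ ≤ max ‖x‖ ‖y‖) {ι : Type*} (s : Finset ι)
    (f : ι → RatFunc Kv) (B : ℝ) (hB : 0 ≤ B) (h : ∀ i ∈ s, gaussNorm (f i) ≤ B) :
    gaussNorm (∑ i ∈ s, f i) ≤ B := by
  classical
  induction s using Finset.induction_on with
  | empty => simpa [gauss_zero] using hB
  | insert a s ha ih =>
    rw [Finset.sum_insert ha]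
    refine (gauss_add hna _ _).trans (max_le (h _ (by simp)) (ih fun i hi => h i (by simp [hi])))

theorem gauss_neg (hna : ∀ x y : Kv, ‖x + y‖ ≤ max ‖x‖ ‖y‖) (f : RatFunc Kv) :
    gaussNorm (-f) = gaussNorm f := by
  have := gauss_smul hna (-1) f
  simpa using this

theorem gauss_ratSubst (hna : ∀ x y : Kv, ‖x + y‖ ≤ max ‖x‖ ‖y‖) {q : Kv} (hq1 : ‖q‖ = 1)
    (f : RatFunc Kv) : gaussNorm (ratSubst q f) = gaussNorm f := by
  unfold ratSubst
  rw [gauss_div hna, polyGauss_comp hq1, polyGauss_comp hq1]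
  · rfl
  · intro h
    have := polyGauss_comp hq1 f.denom
    rw [h] at this
    have h2 := polyGauss_pos f.denom_ne_zero
    rw [← this] at h2
    simp [polyGaussNorm] at h2

/-- substitution as algebra hom -/
def sig (q : Kv) (hq : q ≠ 0) : RatFunc Kv →ₐ[Kv] RatFunc Kv :=
  RatFunc.mapAlgHom (Polynomial.aeval (C q * X : Kv[X])) (by
    intro P hP
    rw [Submonoid.mem_comap, mem_nonZeroDivisors_iff_ne_zero]
    rw [mem_nonZeroDivisors_iff_ne_zero] at hP
    intro h
    apply hP
    have h' : P.comp (C q * X) = 0 := by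
      rw [← h, Polynomial.comp, Polynomial.aeval_def]; rfl
    ext i
    have := congrArg (fun R => R.coeff i) h'
    simpa [Polynomial.comp_C_mul_X_coeff, hq] using this)

theorem sig_apply (q : Kv) (hq : q ≠ 0) (f : RatFunc Kv) : sig q hq f = ratSubst q f := by
  unfold sig
  rw [RatFunc.coe_mapAlgHom_eq_coe_map, RatFunc.map_apply]
  rfl

theorem sig_X (q : Kv) (hq : q ≠ 0) : sig q hq RatFunc.X = q • RatFunc.X := by
  unfold sig
  rw [RatFunc.coe_mapAlgHom_eq_coe_map, ← RatFunc.algebraMap_X,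
    ← div_one (algebraMap Kv[X] (RatFunc Kv) X), ← map_one (algebraMap Kv[X] (RatFunc Kv)),
    RatFunc.map_apply_div]
  simp [RatFunc.smul_eq_C_mul]

/-- `d_q` as a linear map -/
def dq (q : Kv) (hq : q ≠ 0) : RatFunc Kv →ₗ[Kv] RatFunc Kv where
  toFun := qDeriv q
  map_add' f g := by
    simp only [qDeriv, ← sig_apply q hq, map_add]
    ring
  map_smul' c f := by
    simp only [qDeriv, ← sig_apply q hq, map_smul, RingHom.id_apply]
    rw [← smul_sub, RatFunc.smul_eq_C_mul, RatFunc.smul_eq_C_mul, mul_div_assoc]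

theorem dq_apply (q : Kv) (hq : q ≠ 0) (f : RatFunc Kv) :
    dq q hq f = (sig q hq f - f) / (RatFunc.C (q - 1) * RatFunc.X) := by
  rw [sig_apply]; rfl

theorem C_ne_zero' {c : Kv} (h : c ≠ 0) : RatFunc.C c ≠ 0 := by
  simpa using h

theorem dq_sig (q : Kv) (hq : q ≠ 0) (f : RatFunc Kv) :
    dq q hq (sig q hq f) = q • sig q hq (dq q hq f) := by
  have hC : ∀ c, sig q hq (RatFunc.C c) = RatFunc.C c := fun c => by
    rw [← RatFunc.algebraMap_eq_C, AlgHom.commutes]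
  rw [dq_apply, dq_apply, map_div₀, map_sub (sig q hq), map_mul, hC, sig_X, RatFunc.smul_eq_C_mul,
    RatFunc.smul_eq_C_mul]
  have := C_ne_zero' hq
  rw [mul_div_assoc', mul_left_comm (RatFunc.C (q-1)), mul_div_mul_left _ _ this]

theorem dq_mul (q : Kv) (hq : q ≠ 0) (f g : RatFunc Kv) :
    dq q hq (f * g) = dq q hq f * sig q hq g + f * dq q hq g := by
  simp only [dq_apply, map_mul]
  ring

theorem dq_X (q : Kv) (hq : q ≠ 0) (h1 : q ≠ 1) : dq q hq RatFunc.X = 1 := by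
  rw [dq_apply, sig_X, RatFunc.smul_eq_C_mul, map_sub, map_one, ← sub_one_mul]
  apply div_self
  have := C_ne_zero' (sub_ne_zero.2 h1)
  rw [map_sub, map_one] at this
  exact mul_ne_zero this RatFunc.X_ne_zero

theorem dq_C (q : Kv) (hq : q ≠ 0) (c : Kv) : dq q hq (RatFunc.C c) = 0 := by
  have hC : sig q hq (RatFunc.C c) = RatFunc.C c := by
    rw [← RatFunc.algebraMap_eq_C, AlgHom.commutes]
  rw [dq_apply, hC]; simp

end Gauss

section QF

theorem qNat_add (q : Kv) (i j : ℕ) : qNat q (i + j) = qNat q i + q ^ i * qNat q j := by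
  unfold qNat
  rw [Finset.sum_range_add, Finset.mul_sum]
  simp [pow_add]

theorem qNat_mul (q : Kv) (n : ℕ) : (q - 1) * qNat q n = q ^ n - 1 := mul_geom_sum q n

theorem qNat_ne {q : Kv} (hqru : ∀ m : ℕ, 0 < m → q ^ m ≠ 1) (n : ℕ) (hn : 0 < n) :
    qNat q n ≠ 0 := by
  intro h
  have := qNat_mul q n
  rw [h, mul_zero] at this
  exact hqru n hn (sub_eq_zero.1 this.symm)

theorem qFac_ne {q : Kv} (hqru : ∀ m : ℕ, 0 < m → q ^ m ≠ 1) (n : ℕ) : qFactorial q n ≠ 0 := by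
  induction n with
  | zero => simp [qFactorial]
  | succ n ih => exact mul_ne_zero ih (qNat_ne hqru _ n.succ_pos)

theorem qFac_sub (hna : ∀ x y : Kv, ‖x + y‖ ≤ max ‖x‖ ‖y‖) {q : Kv} (hq1 : ‖q‖ = 1) (s : ℕ) :
    ∀ n m : ℕ, n + m = s → ‖qFactorial q (n + m)‖ ≤ ‖qFactorial q n‖ * ‖qFactorial q m‖ := by
  induction s with
  | zero =>
    intro n m h
    obtain ⟨rfl, rfl⟩ : n = 0 ∧ m = 0 := by omega
    simp [qFactorial]
  | succ s ih =>
    intro n m h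
    rcases n with _ | n
    · simp [qFactorial]
    rcases m with _ | m
    · simp [qFactorial]
    have e1 : qFactorial q (n + 1 + (m + 1)) =
        qFactorial q (n + (m + 1)) * qNat q (n + 1) +
          q ^ (n + 1) * (qFactorial q (n + 1 + m) * qNat q (m + 1)) := by
      have : qFactorial q (n + 1 + (m + 1)) =
        qFactorial q (n + 1 + m) * qNat q (n + 1 + (m + 1)) := rfl
      rw [this, qNat_add, show n + (m + 1) = n + 1 + m by ring]
      ring
    rw [e1]
    refine (hna _ _).trans (max_le ?_ ?_)
    · have := ih n (m + 1) (by omega)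
      rw [norm_mul]
      calc _ ≤ (‖qFactorial q n‖ * ‖qFactorial q (m + 1)‖) * ‖qNat q (n + 1)‖ := by gcongr
        _ = _ := by
          rw [show qFactorial q (n + 1) = qFactorial q n * qNat q (n + 1) from rfl, norm_mul]; ring
    · have := ih (n + 1) m (by omega)
      rw [norm_mul, norm_mul, norm_pow, hq1, one_pow, one_mul]
      calc _ ≤ (‖qFactorial q (n + 1)‖ * ‖qFactorial q m‖) * ‖qNat q (m + 1)‖ := by gcongr
        _ = _ := by
          rw [show qFactorial q (m + 1) = qFactorial q m * qNat q (m + 1) from rfl, norm_mul]; ring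

end QF

section Leibniz

variable {R : Type*} [Ring R] [Algebra Kv R]

/-- divided powers -/
def dp (q : Kv) (D : R →ₗ[Kv] R) (n : ℕ) (Y : R) : R := (qFactorial q n)⁻¹ • D^[n] Y

theorem dp_zero (q : Kv) (D : R →ₗ[Kv] R) (Y : R) : dp q D 0 Y = Y := by
  simp [dp, qFactorial]

theorem dp_succ {q : Kv} (hqru : ∀ m : ℕ, 0 < m → q ^ m ≠ 1) (D : R →ₗ[Kv] R) (n : ℕ) (Y : R) :
    D (dp q D n Y) = qNat q (n + 1) • dp q D (n + 1) Y := by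
  unfold dp
  rw [map_smul, Function.iterate_succ_apply', smul_smul]
  congr 1
  have h1 := qFac_ne hqru n
  have h2 := qNat_ne hqru (n + 1) n.succ_pos
  rw [show qFactorial q (n + 1) = qFactorial q n * qNat q (n + 1) from rfl]
  field_simp

theorem sum_anti (q : Kv) (n : ℕ) (F : ℕ → ℕ → R) :
    ∑ ij ∈ Finset.HasAntidiagonal.antidiagonal n, (qNat q (ij.1 + 1) • F (ij.1 + 1) ij.2 +
      (q ^ ij.1 * qNat q (ij.2 + 1)) • F ij.1 (ij.2 + 1)) =
    qNat q (n + 1) • ∑ ij ∈ Finset.HasAntidiagonal.antidiagonal (n + 1), F ij.1 ij.2 := by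
  have h1 := Finset.Nat.sum_antidiagonal_succ (n := n)
    (f := fun ij : ℕ × ℕ => qNat q ij.1 • F ij.1 ij.2)
  have h2 := Finset.Nat.sum_antidiagonal_succ' (n := n)
    (f := fun ij : ℕ × ℕ => (q ^ ij.1 * qNat q ij.2) • F ij.1 ij.2)
  have h0 : qNat q 0 = 0 := by simp [qNat]
  simp only [h0, zero_smul, mul_zero, zero_add] at h1 h2
  rw [Finset.sum_add_distrib, ← h1, ← h2, ← Finset.sum_add_distrib, Finset.smul_sum]
  refine Finset.sum_congr rfl fun ij hij => ?_
  rw [← add_smul, ← qNat_add, Finset.HasAntidiagonal.mem_antidiagonal.1 hij]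

theorem d_iter {q : Kv} (σ : R →ₐ[Kv] R) (d : R →ₗ[Kv] R)
    (hd : ∀ Z, d (σ Z) = q • σ (d Z)) (i : ℕ) (Z : R) :
    d (σ^[i] Z) = q ^ i • σ^[i] (d Z) := by
  induction i with
  | zero => simp
  | succ i ih =>
    rw [Function.iterate_succ_apply', Function.iterate_succ_apply', hd, ih, map_smul, smul_smul,
      pow_succ']

theorem iter_smul (σ : R →ₐ[Kv] R) (i : ℕ) (c : Kv) (Z : R) :
    σ^[i] (c • Z) = c • σ^[i] Z := by
  induction i with
  | zero => simp
  | succ i ih => rw [Function.iterate_succ_apply', Function.iterate_succ_apply', ih, map_smul]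

theorem leibniz {q : Kv} (hqru : ∀ m : ℕ, 0 < m → q ^ m ≠ 1) (σ : R →ₐ[Kv] R)
    (d D : R →ₗ[Kv] R) (hd : ∀ Z, d (σ Z) = q • σ (d Z))
    (hD : ∀ Y Z, D (Y * Z) = D Y * σ Z + Y * d Z) (n : ℕ) (Y Z : R) :
    dp q D n (Y * Z) = ∑ ij ∈ Finset.HasAntidiagonal.antidiagonal n, dp q D ij.1 Y * σ^[ij.1] (dp q d ij.2 Z) := by
  induction n with
  | zero => simp [dp_zero]
  | succ n ih =>
    have h2 := qNat_ne hqru (n + 1) n.succ_pos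
    apply smul_right_injective R h2
    simp only
    rw [← dp_succ hqru, ih, map_sum,
      ← sum_anti q n (fun i j => dp q D i Y * σ^[i] (dp q d j Z))]
    refine Finset.sum_congr rfl fun ij _ => ?_
    rw [hD, dp_succ hqru, d_iter σ d hd, dp_succ hqru, ← Function.iterate_succ_apply' σ, iter_smul,
      smul_mul_assoc, smul_smul, mul_smul_comm]

end Leibniz

section Dbound
open Polynomial

theorem gauss_iter (hna : ∀ x y : Kv, ‖x + y‖ ≤ max ‖x‖ ‖y‖) {q : Kv} (hq1 : ‖q‖ = 1) (hq : q ≠ 0)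
    (i : ℕ) (f : RatFunc Kv) : gaussNorm ((sig q hq)^[i] f) = gaussNorm f := by
  induction i with
  | zero => simp
  | succ i ih => rw [Function.iterate_succ_apply', sig_apply, gauss_ratSubst hna hq1, ih]

theorem dp_const {q : Kv} (hq : q ≠ 0) (c : Kv) (n : ℕ) :
    dp q (dq q hq) (n + 1) (RatFunc.C c) = 0 := by
  unfold dp
  rw [Function.iterate_succ_apply, dq_C]
  have : ∀ k, (dq q hq)^[k] 0 = 0 := fun k => by
    induction k with
    | zero => rfl
    | succ k ih => rw [Function.iterate_succ_apply', ih, map_zero]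
  rw [this, smul_zero]

theorem dp_X_le (hna : ∀ x y : Kv, ‖x + y‖ ≤ max ‖x‖ ‖y‖) {q : Kv} (hq : q ≠ 0)
    (hqru : ∀ m : ℕ, 0 < m → q ^ m ≠ 1) (n : ℕ) :
    gaussNorm (dp q (dq q hq) n RatFunc.X) ≤ 1 := by
  have hq1 : q ≠ 1 := by simpa using hqru 1 one_pos
  have e : (1 : RatFunc Kv) = RatFunc.C 1 := by simp
  have h1 : dp q (dq q hq) 1 RatFunc.X = 1 := by
    simp [dp, qFactorial, qNat, dq_X q hq hq1]
  rcases n with _ | _ | n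
  · rw [dp_zero, gauss_X hna]
  · rw [zero_add, h1, gauss_one hna]
  · have : dp q (dq q hq) (n + 1 + 1) RatFunc.X = 0 := by
      unfold dp
      rw [Function.iterate_succ_apply, dq_X q hq hq1, e]
      have h := dp_const hq (1 : Kv) n
      unfold dp at h
      rw [smul_eq_zero] at h
      rcases h with h | h
      · exact absurd h (inv_ne_zero (qFac_ne hqru _))
      · rw [h, smul_zero]
    rw [this, gauss_zero]; exact zero_le_one

theorem dp_Xpow_le (hna : ∀ x y : Kv, ‖x + y‖ ≤ max ‖x‖ ‖y‖) {q : Kv} (hq1 : ‖q‖ = 1) (hq : q ≠ 0)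
    (hqru : ∀ m : ℕ, 0 < m → q ^ m ≠ 1) (k : ℕ) : ∀ n : ℕ,
    gaussNorm (dp q (dq q hq) n (RatFunc.X ^ k)) ≤ 1 := by
  induction k with
  | zero =>
    intro n
    have e : (RatFunc.X ^ 0 : RatFunc Kv) = RatFunc.C 1 := by simp
    rw [e]
    rcases n with _ | n
    · rw [dp_zero, gauss_C hna]; simp
    · rw [dp_const, gauss_zero]; exact zero_le_one
  | succ k ih =>
    intro n
    rw [pow_succ', leibniz hqru (sig q hq) (dq q hq) (dq q hq) (dq_sig q hq) (dq_mul q hq)]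
    refine gauss_sum hna _ _ _ zero_le_one fun ij _ => ?_
    rw [gauss_mul hna, gauss_iter hna hq1]
    exact mul_le_one₀ (dp_X_le hna hq hqru _) (gauss_nonneg _) (ih _)

theorem dp_sum {q : Kv} {R : Type*} [Ring R] [Algebra Kv R] (D : R →ₗ[Kv] R) (n : ℕ) {ι : Type*}
    (s : Finset ι) (f : ι → R) (c : ι → Kv) :
    dp q D n (∑ i ∈ s, c i • f i) = ∑ i ∈ s, c i • dp q D n (f i) := by
  unfold dp
  simp only [← Module.End.coe_pow, map_sum, map_smul, Finset.smul_sum]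
  exact Finset.sum_congr rfl fun i _ => smul_comm _ _ _

theorem dp_poly_le (hna : ∀ x y : Kv, ‖x + y‖ ≤ max ‖x‖ ‖y‖) {q : Kv} (hq1 : ‖q‖ = 1) (hq : q ≠ 0)
    (hqru : ∀ m : ℕ, 0 < m → q ^ m ≠ 1) (P : Kv[X]) (n : ℕ) :
    gaussNorm (dp q (dq q hq) n (algebraMap Kv[X] (RatFunc Kv) P)) ≤ polyGaussNorm P := by
  have e : algebraMap Kv[X] (RatFunc Kv) P =
      ∑ i ∈ P.support, P.coeff i • (RatFunc.X ^ i : RatFunc Kv) := by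
    conv_lhs => rw [P.as_sum_support_C_mul_X_pow]
    simp [RatFunc.smul_eq_C_mul]
  rw [e, dp_sum]
  refine gauss_sum hna _ _ _ (polyGauss_nonneg _) fun i _ => ?_
  rw [gauss_smul hna]
  exact (mul_le_of_le_one_right (norm_nonneg _) (dp_Xpow_le hna hq1 hq hqru i n)).trans
    (coeff_le_polyGauss P i)

theorem dp_le (hna : ∀ x y : Kv, ‖x + y‖ ≤ max ‖x‖ ‖y‖) {q : Kv} (hq1 : ‖q‖ = 1) (hq : q ≠ 0)
    (hqru : ∀ m : ℕ, 0 < m → q ^ m ≠ 1) (f : RatFunc Kv) (n : ℕ) :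
    gaussNorm (dp q (dq q hq) n f) ≤ gaussNorm f := by
  induction n using Nat.strong_induction_on with
  | _ n ih =>
  set Q := algebraMap Kv[X] (RatFunc Kv) f.denom with hQ
  have hQ0 : 0 < polyGaussNorm f.denom := polyGauss_pos f.denom_ne_zero
  have gQ : gaussNorm Q = polyGaussNorm f.denom := gauss_poly hna _
  have hP : f * Q = algebraMap Kv[X] (RatFunc Kv) f.num := by
    conv_lhs => rw [← f.num_div_denom]
    exact div_mul_cancel₀ _ (RatFunc.algebraMap_ne_zero f.denom_ne_zero)
  have gP : polyGaussNorm f.num = gaussNorm f * polyGaussNorm f.denom := by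
    rw [← gQ, ← gauss_mul hna, hP, gauss_poly hna]
  have L := leibniz hqru (sig q hq) (dq q hq) (dq q hq) (dq_sig q hq) (dq_mul q hq) n f Q
  have hmem : (n, 0) ∈ Finset.HasAntidiagonal.antidiagonal n := by simp
  rw [← Finset.add_sum_erase _ _ hmem, hP] at L
  simp only [dp_zero] at L
  have L' := eq_sub_of_add_eq L.symm
  have B0 : 0 ≤ gaussNorm f * polyGaussNorm f.denom := mul_nonneg (gauss_nonneg _) hQ0.le
  have key : gaussNorm (dp q (dq q hq) n f * (sig q hq)^[n] Q) ≤
      gaussNorm f * polyGaussNorm f.denom := by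
    rw [L', sub_eq_add_neg]
    refine (gauss_add hna _ _).trans (max_le ?_ ?_)
    · rw [← gP]; exact dp_poly_le hna hq1 hq hqru _ _
    · rw [gauss_neg hna]
      refine gauss_sum hna _ _ _ B0 fun ij hij => ?_
      rw [Finset.mem_erase, Finset.HasAntidiagonal.mem_antidiagonal] at hij
      rw [gauss_mul hna, gauss_iter hna hq1]
      have hlt : ij.1 < n := by
        rcases ij with ⟨i, j⟩
        simp only [ne_eq, Prod.mk.injEq] at hij ⊢
        omega
      exact mul_le_mul (ih _ hlt) (dp_poly_le hna hq1 hq hqru _ _) (gauss_nonneg _) (gauss_nonneg _)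
  rw [gauss_mul hna, gauss_iter hna hq1, gQ] at key
  exact le_of_mul_le_mul_right key hQ0

end Dbound

section Mat
variable {μ : ℕ}

theorem gauss_le_mat (M : Matrix (Fin μ) (Fin μ) (RatFunc Kv)) (i j : Fin μ) :
    gaussNorm (M i j) ≤ matGaussNorm M := by
  unfold matGaussNorm
  have h1 : gaussNorm (M i j) ≤ ⨆ j, gaussNorm (M i j) :=
    le_ciSup (f := fun j => gaussNorm (M i j)) (Set.finite_range _).bddAbove j
  exact h1.trans (le_ciSup (f := fun i => ⨆ j, gaussNorm (M i j)) (Set.finite_range _).bddAbove i)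

theorem mat_nonneg (M : Matrix (Fin μ) (Fin μ) (RatFunc Kv)) : 0 ≤ matGaussNorm M :=
  Real.iSup_nonneg fun _ => Real.iSup_nonneg fun _ => gauss_nonneg _

theorem mat_le (M : Matrix (Fin μ) (Fin μ) (RatFunc Kv)) (B : ℝ) (hB : 0 ≤ B)
    (h : ∀ i j, gaussNorm (M i j) ≤ B) : matGaussNorm M ≤ B :=
  Real.iSup_le (fun i => Real.iSup_le (fun j => h i j) hB) hB

theorem mat_smul (hna : ∀ x y : Kv, ‖x + y‖ ≤ max ‖x‖ ‖y‖) (c : Kv)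
    (M : Matrix (Fin μ) (Fin μ) (RatFunc Kv)) :
    matGaussNorm (c • M) = ‖c‖ * matGaussNorm M := by
  unfold matGaussNorm
  rw [Real.mul_iSup_of_nonneg (norm_nonneg c)]
  congr 1; ext i
  rw [Real.mul_iSup_of_nonneg (norm_nonneg c)]
  congr 1; ext j
  rw [Matrix.smul_apply, gauss_smul hna]

/-- substitution on matrices -/
def sigM (q : Kv) (hq : q ≠ 0) (μ : ℕ) :
    Matrix (Fin μ) (Fin μ) (RatFunc Kv) →ₐ[Kv] Matrix (Fin μ) (Fin μ) (RatFunc Kv) :=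
  (sig q hq).mapMatrix

/-- derivation on matrices -/
def dqM (q : Kv) (hq : q ≠ 0) (μ : ℕ) :
    Matrix (Fin μ) (Fin μ) (RatFunc Kv) →ₗ[Kv] Matrix (Fin μ) (Fin μ) (RatFunc Kv) :=
  (dq q hq).mapMatrix

/-- the twisted operator -/
def DM (q : Kv) (hq : q ≠ 0) (G : Matrix (Fin μ) (Fin μ) (RatFunc Kv)) :
    Matrix (Fin μ) (Fin μ) (RatFunc Kv) →ₗ[Kv] Matrix (Fin μ) (Fin μ) (RatFunc Kv) :=
  (LinearMap.mulLeft Kv G) ∘ₗ (sigM q hq μ).toLinearMap + dqM q hq μ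

theorem DM_apply (q : Kv) (hq : q ≠ 0) (G Y : Matrix (Fin μ) (Fin μ) (RatFunc Kv)) :
    DM q hq G Y = G * sigM q hq μ Y + dqM q hq μ Y := rfl

theorem Gseq_eq (q : Kv) (hq : q ≠ 0) (G : Matrix (Fin μ) (Fin μ) (RatFunc Kv)) (n : ℕ) :
    Gseq q G n = (DM q hq G)^[n] 1 := by
  induction n with
  | zero => rfl
  | succ n ih =>
    rw [Function.iterate_succ_apply', ← ih, DM_apply]
    have h1 : sigM q hq μ (Gseq q G n) = (Gseq q G n).map (ratSubst q) := by
      ext i j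
      simp [sigM, sig_apply]
    rw [h1]
    rfl

theorem dqM_sigM (q : Kv) (hq : q ≠ 0) (Z : Matrix (Fin μ) (Fin μ) (RatFunc Kv)) :
    dqM q hq μ (sigM q hq μ Z) = q • sigM q hq μ (dqM q hq μ Z) := by
  ext i j
  exact dq_sig q hq (Z i j)

theorem dqM_mul (q : Kv) (hq : q ≠ 0) (Y Z : Matrix (Fin μ) (Fin μ) (RatFunc Kv)) :
    dqM q hq μ (Y * Z) = dqM q hq μ Y * sigM q hq μ Z + Y * dqM q hq μ Z := by
  ext i j
  change dq q hq ((Y * Z) i j) = (dqM q hq μ Y * sigM q hq μ Z) i j + (Y * dqM q hq μ Z) i j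
  rw [Matrix.mul_apply, Matrix.mul_apply, Matrix.mul_apply, map_sum, ← Finset.sum_add_distrib]
  exact Finset.sum_congr rfl fun k _ => dq_mul q hq _ _

theorem DM_mul (q : Kv) (hq : q ≠ 0) (G Y Z : Matrix (Fin μ) (Fin μ) (RatFunc Kv)) :
    DM q hq G (Y * Z) = DM q hq G Y * sigM q hq μ Z + Y * dqM q hq μ Z := by
  rw [DM_apply, DM_apply, dqM_mul, map_mul, add_mul, mul_assoc, add_assoc]

theorem dp_dqM (q : Kv) (hq : q ≠ 0) (n : ℕ) (Z : Matrix (Fin μ) (Fin μ) (RatFunc Kv))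
    (i j : Fin μ) : dp q (dqM q hq μ) n Z i j = dp q (dq q hq) n (Z i j) := by
  unfold dp
  rw [Matrix.smul_apply]
  congr 1
  induction n with
  | zero => rfl
  | succ n ih => rw [Function.iterate_succ_apply', Function.iterate_succ_apply', ← ih]; rfl

theorem sigM_iter (q : Kv) (hq : q ≠ 0) (n : ℕ) (Z : Matrix (Fin μ) (Fin μ) (RatFunc Kv))
    (i j : Fin μ) : (sigM q hq μ)^[n] Z i j = (sig q hq)^[n] (Z i j) := by
  induction n with
  | zero => rfl
  | succ n ih => rw [Function.iterate_succ_apply', Function.iterate_succ_apply', ← ih]; rfl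

theorem mat_key (hna : ∀ x y : Kv, ‖x + y‖ ≤ max ‖x‖ ‖y‖) {q : Kv} (hq1 : ‖q‖ = 1)
    (hqru : ∀ m : ℕ, 0 < m → q ^ m ≠ 1) (G : Matrix (Fin μ) (Fin μ) (RatFunc Kv)) (n m : ℕ)
    (B : ℝ) (hB : 0 ≤ B)
    (h : ∀ i ≤ n, matGaussNorm (Gseq q G i) / ‖qFactorial q i‖ ≤ B) :
    matGaussNorm (Gseq q G (n + m)) / ‖qFactorial q n‖ ≤ B * matGaussNorm (Gseq q G m) := by
  have hq : q ≠ 0 := by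
    rintro rfl
    simp at hq1
  have L := leibniz hqru (sigM q hq μ) (dqM q hq μ) (DM q hq G) (dqM_sigM q hq) (DM_mul q hq G) n
    1 (Gseq q G m)
  have e : matGaussNorm (Gseq q G (n + m)) / ‖qFactorial q n‖ =
      matGaussNorm (dp q (DM q hq G) n (1 * Gseq q G m)) := by
    rw [one_mul]
    unfold dp
    rw [mat_smul hna, Gseq_eq q hq, Gseq_eq q hq, Function.iterate_add_apply, norm_inv, div_eq_inv_mul]
  have B0 : 0 ≤ B * matGaussNorm (Gseq q G m) := mul_nonneg hB (mat_nonneg _)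
  rw [e, L]
  refine mat_le _ _ B0 fun a b => ?_
  rw [Matrix.sum_apply]
  refine gauss_sum hna _ _ _ B0 fun ij hij => ?_
  have hle : ij.1 ≤ n := by
    have := Finset.HasAntidiagonal.mem_antidiagonal.1 hij
    omega
  rw [Matrix.mul_apply]
  refine gauss_sum hna _ _ _ B0 fun k _ => ?_
  rw [gauss_mul hna, sigM_iter, gauss_iter hna hq1, dp_dqM]
  refine mul_le_mul ?_ ((dp_le hna hq1 hq hqru _ _).trans (gauss_le_mat _ _ _)) (gauss_nonneg _) hB
  refine (gauss_le_mat _ _ _).trans (le_trans (le_of_eq ?_) (h _ hle))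
  unfold dp
  rw [mat_smul hna, Gseq_eq q hq, norm_inv, div_eq_inv_mul]

theorem mat_zero_le (hna : ∀ x y : Kv, ‖x + y‖ ≤ max ‖x‖ ‖y‖) (q : Kv)
    (G : Matrix (Fin μ) (Fin μ) (RatFunc Kv)) :
    matGaussNorm (Gseq q G 0) = 0 ∨ matGaussNorm (Gseq q G 0) = 1 := by
  change matGaussNorm (1 : Matrix (Fin μ) (Fin μ) (RatFunc Kv)) = 0 ∨
    matGaussNorm (1 : Matrix (Fin μ) (Fin μ) (RatFunc Kv)) = 1
  rcases Nat.eq_zero_or_pos μ with rfl | h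
  · left
    simp [matGaussNorm]
  · right
    apply le_antisymm
    · refine mat_le _ _ zero_le_one fun i j => ?_
      by_cases hij : i = j
      · subst hij
        rw [Matrix.one_apply_eq, gauss_one hna]
      · rw [Matrix.one_apply_ne hij, gauss_zero]; exact zero_le_one
    · have := gauss_le_mat (1 : Matrix (Fin μ) (Fin μ) (RatFunc Kv)) ⟨0, h⟩ ⟨0, h⟩
      rwa [Matrix.one_apply_eq, gauss_one hna] at this

end Mat

section Lower

theorem nsum_lt (hna : ∀ x y : Kv, ‖x + y‖ ≤ max ‖x‖ ‖y‖) {ι : Type*} (s : Finset ι)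
    (f : ι → Kv) (B : ℝ) (hB : 0 < B) (h : ∀ i ∈ s, ‖f i‖ < B) : ‖∑ i ∈ s, f i‖ < B := by
  classical
  induction s using Finset.induction_on with
  | empty => simpa using hB
  | insert a s ha ih =>
    rw [Finset.sum_insert ha]
    exact (hna _ _).trans_lt (max_lt (h _ (by simp)) (ih fun i hi => h i (by simp [hi])))

theorem nsum_le (hna : ∀ x y : Kv, ‖x + y‖ ≤ max ‖x‖ ‖y‖) {ι : Type*} (s : Finset ι)
    (f : ι → Kv) (B : ℝ) (hB : 0 ≤ B) (h : ∀ i ∈ s, ‖f i‖ ≤ B) : ‖∑ i ∈ s, f i‖ ≤ B := by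
  classical
  induction s using Finset.induction_on with
  | empty => simpa using hB
  | insert a s ha ih =>
    rw [Finset.sum_insert ha]
    exact (hna _ _).trans (max_le (h _ (by simp)) (ih fun i hi => h i (by simp [hi])))

theorem nat_le_one (hna : ∀ x y : Kv, ‖x + y‖ ≤ max ‖x‖ ‖y‖) (n : ℕ) : ‖(n : Kv)‖ ≤ 1 := by
  have := nsum_le hna (Finset.range n) (fun _ => (1 : Kv)) 1 zero_le_one (by simp)
  simpa using this

theorem int_le_one (hna : ∀ x y : Kv, ‖x + y‖ ≤ max ‖x‖ ‖y‖) (n : ℤ) : ‖(n : Kv)‖ ≤ 1 := by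
  rcases Int.eq_nat_or_neg n with ⟨m, rfl | rfl⟩
  · simpa using nat_le_one hna m
  · simpa using nat_le_one hna m

theorem coprime_norm (hna : ∀ x y : Kv, ‖x + y‖ ≤ max ‖x‖ ‖y‖) {p : ℕ} (hp : p.Prime)
    (hpv : ‖(p : Kv)‖ < 1) (c : ℕ) (hc : ¬ p ∣ c) : ‖(c : Kv)‖ = 1 := by
  refine le_antisymm (nat_le_one hna c) ?_
  have hcop : Nat.gcd p c = 1 := (Nat.Prime.coprime_iff_not_dvd hp).2 hc
  have hb := Nat.gcd_eq_gcd_ab p c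
  rw [hcop] at hb
  have hb' : (1 : Kv) = (p : Kv) * ((Nat.gcdA p c : ℤ) : Kv) + (c : Kv) * ((Nat.gcdB p c : ℤ) : Kv) := by
    exact_mod_cast congrArg (fun z : ℤ => (z : Kv)) hb
  have h1 := hna ((p : Kv) * ((Nat.gcdA p c : ℤ) : Kv)) ((c : Kv) * ((Nat.gcdB p c : ℤ) : Kv))
  rw [← hb', norm_one, norm_mul, norm_mul] at h1
  rcases le_max_iff.1 h1 with h | h
  · have := mul_le_of_le_one_right (norm_nonneg (p : Kv)) (int_le_one hna (Nat.gcdA p c))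
    linarith
  · exact h.trans (mul_le_of_le_one_right (norm_nonneg _) (int_le_one hna _))

theorem bern (P v : ℕ) : v * P + 1 ≤ (P + 1) ^ v := by
  induction v with
  | zero => simp
  | succ v ih =>
    rw [pow_succ]
    nlinarith [Nat.zero_le (v * P * P)]

/-- norm of a positive integer -/
theorem nat_norm (hna : ∀ x y : Kv, ‖x + y‖ ≤ max ‖x‖ ‖y‖) {p : ℕ} (hp : p.Prime)
    (hpv : ‖(p : Kv)‖ < 1) (k : ℕ) (hk : k ≠ 0) :
    ∃ v : ℕ, ‖(k : Kv)‖ = ‖(p : Kv)‖ ^ v ∧ p ^ v ∣ k := by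
  obtain ⟨v, k', h1, h2⟩ := Nat.exists_eq_pow_mul_and_not_dvd hk p hp.ne_one
  refine ⟨v, ?_, ⟨k', h2⟩⟩
  conv_lhs => rw [h2]
  rw [Nat.cast_mul, norm_mul, coprime_norm hna hp hpv k' h1, mul_one, Nat.cast_pow, norm_pow]

theorem nat_norm_lower (hna : ∀ x y : Kv, ‖x + y‖ ≤ max ‖x‖ ‖y‖) {p : ℕ} (hp : p.Prime)
    (hpv : ‖(p : Kv)‖ < 1) (r : ℝ) (hr : 0 < r) (hr1 : r ≤ 1) (hrp : r ^ (p - 1) = ‖(p : Kv)‖)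
    (k : ℕ) : r ^ k ≤ ‖((k + 1 : ℕ) : Kv)‖ := by
  obtain ⟨v, h1, h2⟩ := nat_norm hna hp hpv (k + 1) k.succ_ne_zero
  rw [h1, ← hrp, ← pow_mul]
  apply pow_le_pow_of_le_one hr.le hr1
  have h3 := Nat.le_of_dvd k.succ_pos h2
  have h4 := bern (p - 1) v
  rw [Nat.sub_add_cancel hp.one_le] at h4
  rw [mul_comm]
  omega

theorem binom_lower (hna : ∀ x y : Kv, ‖x + y‖ ≤ max ‖x‖ ‖y‖) {p : ℕ} (hp : p.Prime)
    (hpv : ‖(p : Kv)‖ < 1) (r : ℝ) (hr : 0 < r) (hr1 : r ≤ 1) (hrp : r ^ (p - 1) = ‖(p : Kv)‖)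
    (t : Kv) (ht : ‖t‖ < r) (m : ℕ) : ‖t‖ * ‖(m : Kv)‖ ≤ ‖(1 + t) ^ m - 1‖ := by
  rcases m with _ | m
  · simp
  by_cases ht0 : t = 0
  · simp [ht0]
  have pos : ∀ k : ℕ, 0 < ‖((k + 1 : ℕ) : Kv)‖ := fun k =>
    (pow_pos hr k).trans_le (nat_norm_lower hna hp hpv r hr hr1 hrp k)
  have tpos : 0 < ‖t‖ := norm_pos_iff.2 ht0
  have e : (1 + t) ^ (m + 1) - 1 = (∑ k ∈ Finset.range m, t ^ (k + 2) * ((m + 1).choose (k + 2) : Kv))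
      + ((m + 1 : ℕ) : Kv) * t := by
    rw [add_comm 1 t, add_pow, Finset.sum_range_succ', Finset.sum_range_succ']
    simp
    ring
  set S := ∑ k ∈ Finset.range m, t ^ (k + 2) * ((m + 1).choose (k + 2) : Kv) with hS
  have hSlt : ‖S‖ < ‖t‖ * ‖((m + 1 : ℕ) : Kv)‖ := by
    refine nsum_lt hna _ _ _ (mul_pos tpos (pos m)) fun k _ => ?_
    have h1 : (m + 1) * m.choose (k + 1) = (m + 1).choose (k + 2) * (k + 2) :=
      Nat.add_one_mul_choose_eq m (k + 1)
    have h2 : ‖((m + 1).choose (k + 2) : Kv)‖ * ‖((k + 1 + 1 : ℕ) : Kv)‖ ≤ ‖((m + 1 : ℕ) : Kv)‖ := by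
      rw [← norm_mul, ← Nat.cast_mul, ← h1, Nat.cast_mul, norm_mul]
      exact mul_le_of_le_one_right (norm_nonneg _) (nat_le_one hna _)
    have h3 : ‖t‖ ^ (k + 1) < ‖((k + 1 + 1 : ℕ) : Kv)‖ :=
      (pow_lt_pow_left₀ ht tpos.le k.succ_ne_zero).trans_le
        (nat_norm_lower hna hp hpv r hr hr1 hrp (k + 1))
    apply lt_of_mul_lt_mul_right _ (pos (k + 1)).le
    rw [norm_mul, norm_pow]
    calc ‖t‖ ^ (k + 2) * ‖((m + 1).choose (k + 2) : Kv)‖ * ‖((k + 1 + 1 : ℕ) : Kv)‖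
        = ‖t‖ ^ (k + 2) * (‖((m + 1).choose (k + 2) : Kv)‖ * ‖((k + 1 + 1 : ℕ) : Kv)‖) := by ring
      _ ≤ ‖t‖ ^ (k + 2) * ‖((m + 1 : ℕ) : Kv)‖ := by gcongr
      _ = (‖t‖ * ‖((m + 1 : ℕ) : Kv)‖) * ‖t‖ ^ (k + 1) := by ring
      _ < _ := mul_lt_mul_of_pos_left h3 (mul_pos tpos (pos m))
  have h4 : ((m + 1 : ℕ) : Kv) * t = ((1 + t) ^ (m + 1) - 1) + (-S) := by rw [e]; ring
  have h5 := hna ((1 + t) ^ (m + 1) - 1) (-S)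
  rw [← h4, norm_neg, norm_mul, mul_comm] at h5
  rcases le_max_iff.1 h5 with h | h
  · exact h
  · exact absurd hSlt (not_lt.2 h)

theorem qNat_le (hna : ∀ x y : Kv, ‖x + y‖ ≤ max ‖x‖ ‖y‖) {q : Kv} (hq1 : ‖q‖ = 1) (n : ℕ) :
    ‖qNat q n‖ ≤ 1 :=
  nsum_le hna _ _ _ zero_le_one fun i _ => by simp [hq1]

theorem qFac_lower (hna : ∀ x y : Kv, ‖x + y‖ ≤ max ‖x‖ ‖y‖)
    (p : ℕ) (hp : Nat.Prime p) (hpv : ‖(p : Kv)‖ < 1)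
    (q : Kv) (hq1 : ‖q‖ = 1) (hqru : ∀ m : ℕ, 0 < m → q ^ m ≠ 1)
    (κ : ℕ) (hκpos : 0 < κ) (hκlt : ‖1 - q ^ κ‖ < 1)
    (hκmin : ∀ m : ℕ, 0 < m → ‖1 - q ^ m‖ < 1 → κ ≤ m)
    (hdw : ‖1 - q ^ κ‖ < ‖(p : Kv)‖ ^ ((1 : ℝ) / ((p : ℝ) - 1))) :
    ∃ c : ℝ, 0 < c ∧ ∀ n, c ^ n ≤ ‖qFactorial q n‖ := by
  have hp2 : (2 : ℝ) ≤ p := by exact_mod_cast hp.two_le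
  set r := ‖(p : Kv)‖ ^ ((1 : ℝ) / ((p : ℝ) - 1)) with hrdef
  have hr : 0 < r := (norm_nonneg _).trans_lt hdw
  have hr1 : r ≤ 1 := Real.rpow_le_one (norm_nonneg _) hpv.le (by
    apply div_nonneg zero_le_one; linarith)
  have hrp : r ^ (p - 1) = ‖(p : Kv)‖ := by
    rw [hrdef, ← Real.rpow_natCast, ← Real.rpow_mul (norm_nonneg _), Nat.cast_sub hp.one_le,
      Nat.cast_one, one_div_mul_cancel (by linarith), Real.rpow_one]
  have hpp : 0 < ‖(p : Kv)‖ := by rw [← hrp]; positivity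
  set π := ‖1 - q ^ κ‖ with hπ
  have hπ0 : 0 < π := norm_pos_iff.2 (sub_ne_zero.2 (hqru κ hκpos).symm)
  have hq1le : ‖q - 1‖ ≤ 1 := by
    rw [sub_eq_add_neg]
    refine (hna _ _).trans ?_
    simp [hq1]
  have low : ∀ n : ℕ, 0 < n → π * ‖(n : Kv)‖ ≤ ‖q ^ n - 1‖ := by
    intro n hn
    by_cases hdvd : κ ∣ n
    · obtain ⟨m, rfl⟩ := hdvd
      have := binom_lower hna hp hpv r hr hr1 hrp (q ^ κ - 1) (by rw [norm_sub_rev]; exact hdw) m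
      rw [add_sub_cancel, ← pow_mul, norm_sub_rev (q ^ κ) 1] at this
      refine le_trans ?_ this
      rw [Nat.cast_mul, norm_mul]
      have h1 := nat_le_one hna κ
      have h2 := norm_nonneg (m : Kv)
      exact mul_le_mul_of_nonneg_left (mul_le_of_le_one_left h2 h1) hπ0.le
    · have h1 : 1 ≤ ‖q ^ n - 1‖ := by
        by_contra hlt
        rw [not_le] at hlt
        have hs : 0 < n % κ := Nat.pos_of_ne_zero fun h => hdvd (Nat.dvd_of_mod_eq_zero h)
        have hs' := Nat.mod_lt n hκpos
        have e : n = κ * (n / κ) + n % κ := (Nat.div_add_mod n κ).symm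
        have hk : ‖q ^ (κ * (n / κ)) - 1‖ < 1 := by
          rw [pow_mul, ← qNat_mul, norm_mul, norm_sub_rev]
          exact (mul_le_of_le_one_right (norm_nonneg _)
            (qNat_le hna (by rw [norm_pow, hq1, one_pow]) _)).trans_lt hκlt
        have e2 : q ^ (κ * (n / κ)) * (1 - q ^ (n % κ)) =
            (q ^ (κ * (n / κ)) - 1) + -(q ^ n - 1) := by
          conv_rhs => rw [e, pow_add]
          rw [← e]; ring
        have h3 : ‖1 - q ^ (n % κ)‖ < 1 := by
          have := congrArg norm e2
          rw [norm_mul, norm_pow, hq1, one_pow, one_mul] at this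
          rw [this]
          refine (hna _ _).trans_lt (max_lt hk (by rwa [norm_neg]))
        have := hκmin _ hs h3
        omega
      refine le_trans ?_ h1
      exact mul_le_one₀ hκlt.le (norm_nonneg _) (nat_le_one hna n)
  have lowN : ∀ n : ℕ, 0 < n → π * ‖(n : Kv)‖ ≤ ‖qNat q n‖ := by
    intro n hn
    refine (low n hn).trans ?_
    rw [← qNat_mul, norm_mul]
    exact mul_le_of_le_one_left (norm_nonneg _) hq1le
  have lowF : ∀ n : ℕ, π ^ n * ‖(n.factorial : Kv)‖ ≤ ‖qFactorial q n‖ := by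
    intro n
    induction n with
    | zero => simp [qFactorial]
    | succ n ih =>
      rw [show qFactorial q (n + 1) = qFactorial q n * qNat q (n + 1) from rfl, norm_mul,
        Nat.factorial_succ, Nat.cast_mul, norm_mul]
      calc _ = (π ^ n * ‖(n.factorial : Kv)‖) * (π * ‖((n + 1 : ℕ) : Kv)‖) := by ring
        _ ≤ _ := by
          have := lowN (n + 1) n.succ_pos
          gcongr
  refine ⟨π * ‖(p : Kv)‖, mul_pos hπ0 hpp, fun n => ?_⟩
  refine le_trans ?_ (lowF n)
  rw [mul_pow]
  refine mul_le_mul_of_nonneg_left ?_ (pow_nonneg hπ0.le n)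
  obtain ⟨v, h1, h2⟩ := nat_norm hna hp hpv n.factorial n.factorial_ne_zero
  rw [h1]
  apply pow_le_pow_of_le_one hpp.le hpv.le
  haveI := Fact.mk hp
  rcases Nat.eq_zero_or_pos n with rfl | hn
  · simp only [Nat.factorial_zero, Nat.dvd_one, Nat.pow_eq_one] at h2
    have := hp.ne_one
    omega
  have h3 := sub_one_mul_padicValNat_factorial_lt_of_ne_zero p hn.ne'
  have h4 := (padicValNat_dvd_iff_le n.factorial_ne_zero).1 h2
  have h5 : 1 ≤ p - 1 := by have := hp.two_le; omega
  nlinarith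

end Lower

section Analysis

theorem chi_iff (x M : ℝ) (n : ℕ) (hn : 0 < n) :
    ENNReal.ofReal (Real.exp (-M)) ≤ (ENNReal.ofReal x) ^ (-(1 / (n : ℝ))) ↔
      x ≤ Real.exp (M * n) := by
  have hn' : (0 : ℝ) < n := by exact_mod_cast hn
  rw [ENNReal.rpow_neg, Real.exp_neg, ENNReal.ofReal_inv_of_pos (Real.exp_pos M),
    ENNReal.inv_le_inv, one_div, ENNReal.rpow_inv_le_iff hn',
    ENNReal.ofReal_rpow_of_pos (Real.exp_pos M), ← Real.exp_mul,
    ENNReal.ofReal_le_ofReal_iff (Real.exp_pos _).le]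

theorem analytic (a F h : ℕ → ℝ) (ha : ∀ n, 0 ≤ a n) (hF : ∀ n, 0 < F n) (hF0 : F 0 = 1)
    (c : ℝ) (hc : 0 < c) (hcF : ∀ n, c ^ n ≤ F n) (hFs : ∀ n m, F (n + m) ≤ F n * F m)
    (ha0 : a 0 = 0 ∨ a 0 = 1)
    (hkey : ∀ n m B, 0 ≤ B → (∀ i ≤ n, a i ≤ B) →
      a (n + m) * F (n + m) ≤ F n * B * (a m * F m))
    (hh : ∀ n : ℕ, h n = ⨆ s : Fin (n + 1), Real.log (a s)) (χ : ℝ≥0∞)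
    (hχ : χ = min 1 (Filter.liminf (fun n : ℕ =>
      (ENNReal.ofReal (a n)) ^ (-(1 / (n : ℝ)))) Filter.atTop)) :
    Filter.Tendsto (fun n : ℕ => h n / (n : ℝ)) Filter.atTop
      (nhds (Real.log (1 / χ.toReal))) := by
  have hlog : ∀ n s, s ≤ n → Real.log (a s) ≤ h n := by
    intro n s hs
    rw [hh]
    exact le_ciSup (f := fun s : Fin (n + 1) => Real.log (a s)) (Set.finite_range _).bddAbove
      ⟨s, by omega⟩
  have h0 : ∀ n, 0 ≤ h n := by
    intro n
    have := hlog n 0 (Nat.zero_le n)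
    rcases ha0 with e | e <;> simpa [e] using this
  have haexp : ∀ n s, s ≤ n → a s ≤ Real.exp (h n) := by
    intro n s hs
    rcases (ha s).eq_or_lt with e | e
    · rw [← e]; exact (Real.exp_pos _).le
    · rw [← Real.log_le_iff_le_exp e]; exact hlog n s hs
  -- Fekete
  have hsub : Subadditive (fun n => Real.log (F n)) := by
    intro m n
    rw [← Real.log_mul (hF m).ne' (hF n).ne']
    exact Real.log_le_log (hF _) (hFs m n)
  have hbdd : BddBelow (Set.range fun n : ℕ => Real.log (F n) / n) := by
    refine ⟨min 0 (Real.log c), ?_⟩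
    rintro _ ⟨n, rfl⟩
    rcases Nat.eq_zero_or_pos n with rfl | hn
    · simp
    · have hn' : (0 : ℝ) < n := by exact_mod_cast hn
      refine (min_le_right _ _).trans ?_
      simp only
      rw [le_div_iff₀ hn', mul_comm, ← Real.log_pow]
      exact Real.log_le_log (pow_pos hc n) (hcF n)
  have hlim := hsub.tendsto_lim hbdd
  set l := hsub.lim with hl
  have hle : ∀ n : ℕ, l * n ≤ Real.log (F n) := by
    intro n
    rcases Nat.eq_zero_or_pos n with rfl | hn
    · simp [hF0]
    · have hn' : (0 : ℝ) < n := by exact_mod_cast hn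
      exact (le_div_iff₀ hn').1 (hsub.lim_le_div hbdd hn.ne')
  -- growth bound
  have grow : ∀ m : ℕ, 0 < m → ∃ C : ℝ, 0 < C ∧
      ∀ N : ℕ, a N ≤ C * Real.exp ((h m / m + (Real.log (F m) / m - l)) * N) := by
    intro m hm
    have hm' : (0 : ℝ) < m := by exact_mod_cast hm
    set M := h m / m + (Real.log (F m) / m - l) with hM
    have hFm : F m * Real.exp (h m) = Real.exp ((M + l) * m) := by
      have : (M + l) * m = Real.log (F m) + h m := by
        rw [hM]; field_simp; ring
      rw [this, Real.exp_add, Real.exp_log (hF m)]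
    have hnn : ∀ r ∈ Finset.range m, 0 ≤ a r * F r * Real.exp (-((M + l) * r)) := fun r _ =>
      mul_nonneg (mul_nonneg (ha r) (hF r).le) (Real.exp_pos _).le
    set C := 1 + ∑ r ∈ Finset.range m, a r * F r * Real.exp (-((M + l) * r)) with hC
    have hCpos : 0 < C := by
      have := Finset.sum_nonneg hnn
      linarith
    refine ⟨C, hCpos, ?_⟩
    have g : ∀ N : ℕ, a N * F N ≤ C * Real.exp ((M + l) * N) := by
      intro N
      induction N using Nat.strong_induction_on with
      | _ N ih =>
      by_cases hN : N < m
      · have h1 := Finset.single_le_sum hnn (Finset.mem_range.2 hN)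
        have h2 : a N * F N * Real.exp (-((M + l) * N)) ≤ C := by linarith
        rwa [Real.exp_neg, ← div_eq_mul_inv, div_le_iff₀ (Real.exp_pos _)] at h2
      · obtain ⟨k, rfl⟩ : ∃ k, N = m + k := ⟨N - m, by omega⟩
        have h1 := hkey m k _ (Real.exp_pos (h m)).le (haexp m)
        have h2 := ih k (by omega)
        rw [hFm] at h1
        calc _ ≤ _ := h1
          _ ≤ Real.exp ((M + l) * m) * (C * Real.exp ((M + l) * k)) := by gcongr
          _ = _ := by
            rw [Nat.cast_add, mul_add, Real.exp_add]; ring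
    intro N
    have h1 := g N
    have h2 : Real.exp (l * N) ≤ F N := by
      rw [← Real.le_log_iff_exp_le (hF N)]; exact hle N
    have e1 : Real.exp ((M + l) * N) = Real.exp (M * N) * Real.exp (l * N) := by
      rw [← Real.exp_add]; congr 1; ring
    rw [e1, ← mul_assoc] at h1
    have h3 : a N * Real.exp (l * N) ≤ a N * F N := mul_le_mul_of_nonneg_left h2 (ha N)
    exact le_of_mul_le_mul_right (h3.trans h1) (Real.exp_pos _)
  -- lower bound for χ
  have low : ∀ M C : ℝ, 0 ≤ M → 0 < C → (∀ N : ℕ, a N ≤ C * Real.exp (M * N)) →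
      ∀ M' > M, ENNReal.ofReal (Real.exp (-M')) ≤ χ := by
    intro M C hM hC hb M' hM'
    rw [hχ]
    refine le_min ?_ ?_
    · rw [← ENNReal.ofReal_one]
      apply ENNReal.ofReal_le_ofReal
      rw [Real.exp_le_one_iff]; linarith
    · refine le_liminf_of_le (by isBoundedDefault) ?_
      have ht : Tendsto (fun N : ℕ => (M' - M) * (N : ℝ)) atTop atTop :=
        tendsto_natCast_atTop_atTop.const_mul_atTop (by linarith)
      filter_upwards [ht.eventually_ge_atTop (Real.log C), eventually_gt_atTop 0] with N h1 h2
      rw [chi_iff _ _ _ h2]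
      refine (hb N).trans ?_
      rw [← Real.exp_log hC, ← Real.exp_add]
      apply Real.exp_le_exp.2
      linarith
  have hM0 : ∀ m : ℕ, 0 < m → 0 ≤ h m / m + (Real.log (F m) / m - l) := by
    intro m hm
    have hm' : (0 : ℝ) < m := by exact_mod_cast hm
    have h1 : 0 ≤ h m / m := div_nonneg (h0 m) hm'.le
    have h2 : l ≤ Real.log (F m) / m := (le_div_iff₀ hm').2 (hle m)
    linarith
  have hχ1 : χ ≤ 1 := by rw [hχ]; exact min_le_left _ _
  have hχtop : χ ≠ ⊤ := ne_top_of_le_ne_top ENNReal.one_ne_top hχ1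
  have hχpos : 0 < χ.toReal := by
    obtain ⟨C, hC, hb⟩ := grow 1 one_pos
    have := low _ C (hM0 1 one_pos) hC hb _ (lt_add_one _)
    have := (ENNReal.ofReal_le_iff_le_toReal hχtop).1 this
    exact (Real.exp_pos _).trans_le this
  set L := Real.log (1 / χ.toReal) with hL
  have hLχ : χ.toReal = Real.exp (-L) := by
    rw [hL, one_div, Real.log_inv, neg_neg, Real.exp_log hχpos]
  have hLle : ∀ m : ℕ, 0 < m → L ≤ h m / m + (Real.log (F m) / m - l) := by
    intro m hm
    refine le_of_forall_gt_imp_ge_of_dense fun M' hM' => ?_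
    obtain ⟨C, hC, hb⟩ := grow m hm
    have := low _ C (hM0 m hm) hC hb M' hM'
    have := (ENNReal.ofReal_le_iff_le_toReal hχtop).1 this
    rw [hLχ, Real.exp_le_exp] at this
    linarith
  have hL0 : 0 ≤ L := by
    have := ENNReal.toReal_mono ENNReal.one_ne_top hχ1
    rw [hLχ, ENNReal.toReal_one, Real.exp_le_one_iff] at this
    linarith
  have up : ∀ M > L, ∀ᶠ N : ℕ in atTop, a N ≤ Real.exp (M * N) := by
    intro M hM
    have h1 : ENNReal.ofReal (Real.exp (-M)) < χ := by
      rw [← ENNReal.ofReal_toReal hχtop, hLχ, ENNReal.ofReal_lt_ofReal_iff (Real.exp_pos _)]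
      apply Real.exp_lt_exp.2; linarith
    have h2 := h1.trans_le (hχ.le.trans (min_le_right _ _))
    have h3 := Filter.eventually_lt_of_lt_liminf h2 (by isBoundedDefault)
    filter_upwards [h3, eventually_gt_atTop 0] with N h4 h5
    exact (chi_iff _ _ _ h5).1 h4.le
  rw [tendsto_order]
  constructor
  · intro y hy
    have h1 : ∀ᶠ n : ℕ in atTop, Real.log (F n) / n < l + (L - y) :=
      hlim.eventually_lt_const (by linarith)
    filter_upwards [h1, eventually_gt_atTop 0] with n h2 h3
    have := hLle n h3
    linarith
  · intro y hy
    set M := (L + y) / 2 with hM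
    have hM1 : L < M := by rw [hM]; linarith
    have hM2 : M < y := by rw [hM]; linarith
    obtain ⟨N0, hN0⟩ := eventually_atTop.1 (up M hM1)
    have hb : ∀ n : ℕ, h n ≤ h N0 + M * n := by
      intro n
      have hMn : 0 ≤ M * n := mul_nonneg (by linarith) (Nat.cast_nonneg n)
      rw [hh]
      refine ciSup_le fun s => ?_
      by_cases hs : (s : ℕ) ≤ N0
      · have := hlog N0 s hs
        linarith
      · have h1 := hN0 s (by omega)
        have h2 : Real.log (a s) ≤ M * (s : ℕ) := by
          rcases (ha s).eq_or_lt with e | e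
          · rw [← e, Real.log_zero]
            exact mul_nonneg (by linarith) (Nat.cast_nonneg _)
          · rwa [Real.log_le_iff_le_exp e]
        have h3 : M * ((s : ℕ) : ℝ) ≤ M * n := by
          apply mul_le_mul_of_nonneg_left _ (by linarith)
          have := s.2
          exact_mod_cast (by omega : (s : ℕ) ≤ n)
        have := h0 N0
        linarith
    have ht : Tendsto (fun n : ℕ => h N0 / (n : ℝ)) atTop (nhds 0) :=
      tendsto_const_div_atTop_nhds_zero_nat _
    filter_upwards [ht.eventually_lt_const (show (0 : ℝ) < y - M by linarith),
      eventually_gt_atTop 0] with n h1 h2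
    have hn' : (0 : ℝ) < n := by exact_mod_cast h2
    have h3 : h n / n ≤ (h N0 + M * n) / n := div_le_div_of_nonneg_right (hb n) hn'.le
    rw [add_div, mul_div_cancel_right₀ _ hn'.ne'] at h3
    linarith

end Analysis

/-- The sequence h(n)/n converges to log(1/χ_v). -/
theorem q_chi_as_limit
    {Kv : Type*} [NontriviallyNormedField Kv] [CompleteSpace Kv]
    (hna : ∀ x y : Kv, ‖x + y‖ ≤ max ‖x‖ ‖y‖)
    (p : ℕ) (hp : Nat.Prime p) (hpv : ‖(p : Kv)‖ < 1)
    (q : Kv) (hq1 : ‖q‖ = 1) (hqru : ∀ m : ℕ, 0 < m → q ^ m ≠ 1)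
    (κ : ℕ) (hκpos : 0 < κ) (hκlt : ‖1 - q ^ κ‖ < 1)
    (hκmin : ∀ m : ℕ, 0 < m → ‖1 - q ^ m‖ < 1 → κ ≤ m)
    (hdw : ‖1 - q ^ κ‖ < ‖(p : Kv)‖ ^ ((1 : ℝ) / ((p : ℝ) - 1)))
    (μ : ℕ) (G : Matrix (Fin μ) (Fin μ) (RatFunc Kv))
    (h : ℕ → ℝ)
    (hh : ∀ n : ℕ, h n = ⨆ s : Fin (n + 1),
      Real.log (matGaussNorm (Gseq q G (s : ℕ)) / ‖qFactorial q (s : ℕ)‖)) :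
    Filter.Tendsto (fun n : ℕ => h n / (n : ℝ)) Filter.atTop
      (nhds (Real.log (1 / (chiV q G).toReal))) := by
  obtain ⟨c, hc, hcF⟩ := qFac_lower hna p hp hpv q hq1 hqru κ hκpos hκlt hκmin hdw
  have hF : ∀ n, 0 < ‖qFactorial q n‖ := fun n => norm_pos_iff.2 (qFac_ne hqru n)
  refine analytic (fun n => matGaussNorm (Gseq q G n) / ‖qFactorial q n‖)
    (fun n => ‖qFactorial q n‖) h (fun n => div_nonneg (mat_nonneg _) (norm_nonneg _)) hF
    (by simp [qFactorial]) c hc hcF (fun n m => qFac_sub hna hq1 _ n m rfl) ?_ ?_ hh _ rfl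
  · simpa [qFactorial] using mat_zero_le hna q G
  · intro n m B hB hb
    have := mat_key hna hq1 hqru G n m B hB hb
    rw [div_mul_cancel₀ _ (hF _).ne', div_mul_cancel₀ _ (hF _).ne', mul_assoc, mul_comm]
    exact (div_le_iff₀ (hF n)).1 this
end
end
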